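/- arXiv:1808.06371 — 3 statements merged into one kernel-verified Lean document; each statement's English description precedes it below -/
import Mathlib

section
/- Let G be a finitely generated virtually abelian group, let S be a finite set generating G as a monoid with weight function ω : S → ℕ₊, and let H be any subgroup of G. Then the weighted growth series of H relative to G, namely ∑_{n≥0} #{h ∈ H : ω(h) = n} zⁿ, is a rational power series. -/
/-- The weight of a group element `g` with respect to a generating set `S` and a
weight function `ω`: the minimal total weight among all words over `S` representing `g`. -/
noncomputable def wordWeight {G : Type*} [Group G] (S : Set G) (ω : G → ℕ) (g : G) : ℕ :=
  sInf {n | ∃ l : List G, (∀ x ∈ l, x ∈ S) ∧ l.prod = g ∧ (l.map ω).sum = n}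

/-- A formal power series with integer coefficients is rational if it is the quotient
of two integer polynomials. -/
def IsRationalSeries (f : PowerSeries ℤ) : Prop :=
  ∃ p q : Polynomial ℤ, q ≠ 0 ∧ f * (q : PowerSeries ℤ) = (p : PowerSeries ℤ)


namespace RelGrowth

open Pointwise

section Series

theorem rat_zero : IsRationalSeries 0 := ⟨0, 1, one_ne_zero, by simp⟩

theorem rat_add {f g : PowerSeries ℤ} (hf : IsRationalSeries f) (hg : IsRationalSeries g) :
    IsRationalSeries (f + g) := by
  obtain ⟨p, q, hq, h⟩ := hf
  obtain ⟨p', q', hq', h'⟩ := hg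
  refine ⟨p * q' + p' * q, q * q', mul_ne_zero hq hq', ?_⟩
  push_cast
  rw [← h, ← h']
  ring

theorem rat_polymul {f : PowerSeries ℤ} (r : Polynomial ℤ) (hf : IsRationalSeries f) :
    IsRationalSeries ((r : PowerSeries ℤ) * f) := by
  obtain ⟨p, q, hq, h⟩ := hf
  refine ⟨r * p, q, hq, ?_⟩
  push_cast
  rw [← h]
  ring

theorem rat_neg {f : PowerSeries ℤ} (hf : IsRationalSeries f) : IsRationalSeries (-f) := by
  have := rat_polymul (-1) hf
  simpa using this

theorem rat_sub {f g : PowerSeries ℤ} (hf : IsRationalSeries f) (hg : IsRationalSeries g) :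
    IsRationalSeries (f - g) := by
  rw [sub_eq_add_neg]
  exact rat_add hf (rat_neg hg)

theorem rat_Xpow_mul {f : PowerSeries ℤ} (k : ℕ) (hf : IsRationalSeries f) :
    IsRationalSeries (PowerSeries.X ^ k * f) := by
  have := rat_polymul (Polynomial.X ^ k) hf
  simpa using this

theorem rat_div {f g : PowerSeries ℤ} {k : ℕ} (hk : 0 < k) (hg : IsRationalSeries g)
    (h : f = PowerSeries.X ^ k * f + g) : IsRationalSeries f := by
  obtain ⟨p, q, hq, e⟩ := hg
  refine ⟨p, (1 - Polynomial.X ^ k) * q, mul_ne_zero ?_ hq, ?_⟩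
  · intro h0
    have := congrArg (Polynomial.eval 0) h0
    simp [hk.ne'] at this
  · push_cast
    rw [← e]
    have : g = f - PowerSeries.X ^ k * f := by rw [eq_sub_iff_add_eq, add_comm]; exact h.symm
    rw [this]
    ring

theorem rat_sum {ι : Type*} (s : Finset ι) (f : ι → PowerSeries ℤ)
    (h : ∀ i ∈ s, IsRationalSeries (f i)) : IsRationalSeries (∑ i ∈ s, f i) :=
  Finset.sum_induction f IsRationalSeries (fun _ _ => rat_add) rat_zero h

end Series

section Count

variable {M M' : Type*}

/-- Finite fibres of the weight on a set. -/
def FF (w : M → ℕ) (A : Set M) : Prop := ∀ k, {m | m ∈ A ∧ w m = k}.Finite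

/-- The counting series of a set. -/
noncomputable def cnt (w : M → ℕ) (A : Set M) : PowerSeries ℤ :=
  PowerSeries.mk fun k => ({m | m ∈ A ∧ w m = k}.ncard : ℤ)

theorem FF.mono {w : M → ℕ} {A B : Set M} (h : FF w B) (hAB : A ⊆ B) : FF w A :=
  fun k => (h k).subset fun _ hm => ⟨hAB hm.1, hm.2⟩

theorem FF.union {w : M → ℕ} {A B : Set M} (hA : FF w A) (hB : FF w B) : FF w (A ∪ B) :=
  fun k => ((hA k).union (hB k)).subset (by
    rintro m ⟨h | h, hk⟩
    · exact Or.inl ⟨h, hk⟩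
    · exact Or.inr ⟨h, hk⟩)

theorem cnt_union_add_inter {w : M → ℕ} {A B : Set M} (hA : FF w A) (hB : FF w B) :
    cnt w (A ∪ B) + cnt w (A ∩ B) = cnt w A + cnt w B := by
  ext k
  simp only [cnt, map_add, PowerSeries.coeff_mk]
  have := Set.ncard_union_add_ncard_inter _ _ (hA k) (hB k)
  have e1 : {m | m ∈ A ∪ B ∧ w m = k} = {m | m ∈ A ∧ w m = k} ∪ {m | m ∈ B ∧ w m = k} := by
    ext m; simp only [Set.mem_ofPred_eq, Set.mem_union]; tauto
  have e2 : {m | m ∈ A ∩ B ∧ w m = k} = {m | m ∈ A ∧ w m = k} ∩ {m | m ∈ B ∧ w m = k} := by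
    ext m; simp only [Set.mem_ofPred_eq, Set.mem_inter_iff]; tauto
  rw [e1, e2]
  exact_mod_cast this

theorem cnt_empty (w : M → ℕ) : cnt w ∅ = 0 := by
  ext k
  simp [cnt]

theorem cnt_disj {w : M → ℕ} {A B : Set M} (hA : FF w A) (hB : FF w B) (h : Disjoint A B) :
    cnt w (A ∪ B) = cnt w A + cnt w B := by
  rw [← cnt_union_add_inter hA hB, h.inter_eq, cnt_empty, add_zero]

theorem cnt_image {w : M → ℕ} {w' : M' → ℕ} {c : ℕ} {D : Set M} {f : M → M'}
    (hf : Set.InjOn f D) (hw : ∀ d ∈ D, w' (f d) = w d + c) :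
    cnt w' (f '' D) = PowerSeries.X ^ c * cnt w D := by
  ext k
  rw [PowerSeries.coeff_X_pow_mul']
  simp only [cnt, PowerSeries.coeff_mk]
  split_ifs with h
  · have : {m | m ∈ f '' D ∧ w' m = k} = f '' {m | m ∈ D ∧ w m = k - c} := by
      ext m
      constructor
      · rintro ⟨⟨d, hd, rfl⟩, hk⟩
        rw [hw d hd] at hk
        exact ⟨d, ⟨hd, by omega⟩, rfl⟩
      · rintro ⟨d, ⟨hd, hk⟩, rfl⟩
        refine ⟨⟨d, hd, rfl⟩, ?_⟩
        rw [hw d hd]; omega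
    rw [this, Set.InjOn.ncard_image (hf.mono fun _ h => h.1)]
  · have : {m | m ∈ f '' D ∧ w' m = k} = ∅ := by
      ext m
      simp only [Set.mem_ofPred_eq, Set.mem_empty_iff_false, iff_false]
      rintro ⟨⟨d, hd, rfl⟩, hk⟩
      rw [hw d hd] at hk
      omega
    rw [this]; simp

theorem FF_of_image {w : M → ℕ} {w' : M' → ℕ} {c : ℕ} {D : Set M} {f : M → M'}
    (hf : Set.InjOn f D) (hw : ∀ d ∈ D, w' (f d) = w d + c) (h : FF w' (f '' D)) : FF w D := by
  intro k
  refine Set.Finite.of_finite_image ((h (k + c)).subset ?_) (hf.mono fun _ h => h.1)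
  rintro _ ⟨d, ⟨hd, rfl⟩, rfl⟩
  exact ⟨⟨d, hd, rfl⟩, hw d hd⟩

theorem FF_image {w : M → ℕ} {w' : M' → ℕ} {c : ℕ} {D : Set M} {f : M → M'}
    (hw : ∀ d ∈ D, w' (f d) = w d + c) (h : FF w D) : FF w' (f '' D) := by
  intro k
  refine ((h (k - c)).image f).subset ?_
  rintro _ ⟨⟨d, hd, rfl⟩, hk⟩
  refine ⟨d, ⟨hd, ?_⟩, rfl⟩
  rw [hw d hd] at hk; omega

theorem rat_cnt_finite (w : M → ℕ) {A : Set M} (hA : A.Finite) : IsRationalSeries (cnt w A) := by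
  obtain ⟨K, hK⟩ := (hA.image w).bddAbove
  refine ⟨PowerSeries.trunc (K + 1) (cnt w A), 1, one_ne_zero, ?_⟩
  ext k
  simp only [Polynomial.coe_one, mul_one, Polynomial.coeff_coe, PowerSeries.coeff_trunc]
  split_ifs with h
  · rfl
  · have : {m | m ∈ A ∧ w m = k} = ∅ := by
      ext m
      simp only [Set.mem_ofPred_eq, Set.mem_empty_iff_false, iff_false]
      rintro ⟨h1, rfl⟩
      exact h (Nat.lt_succ_of_le (hK ⟨m, h1, rfl⟩))
    simp [cnt, this]

end Count

theorem stabilize {α : Type*} [Preorder α] [WellQuasiOrderedLE α] (D : ℕ → Set α)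
    (hD : ∀ j, IsLowerSet (D j)) (hanti : Antitone D) : ∃ J, ∀ j, J ≤ j → D j = D J := by
  by_contra! hcon
  have : ∀ J, ∃ j x, J ≤ j ∧ x ∈ D J ∧ x ∉ D j := by
    intro J
    obtain ⟨j, hj, hne⟩ := hcon J
    have : ¬ D J ⊆ D j := fun h => hne (Set.Subset.antisymm (hanti hj) h)
    obtain ⟨x, hx, hx'⟩ := Set.not_subset.1 this
    exact ⟨j, x, hj, hx, hx'⟩
  choose nxt x hle hx hx' using this
  let s : ℕ → ℕ := fun i => nxt^[i] 0
  have hs : ∀ i, s (i + 1) = nxt (s i) := fun i => Function.iterate_succ_apply' nxt i 0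
  have hmono : Monotone s := monotone_nat_of_le_succ fun i => by rw [hs]; exact hle _
  obtain ⟨i, k, hik, hxx⟩ := (wellQuasiOrdered_le (α := α)) (fun i => x (s i))
  apply hx' (s i)
  rw [← hs]
  exact hD _ hxx (hanti (hmono hik) (hx (s k)))

/-- Counting series of lower sets of `ℕ^r` are rational. -/
theorem rat_lower : ∀ (r : ℕ) (w : (Fin r → ℕ) →+ ℕ) (D : Set (Fin r → ℕ)),
    IsLowerSet D → FF w D → IsRationalSeries (cnt w D) := by
  intro r
  induction r with
  | zero => exact fun w D _ _ => rat_cnt_finite _ (Set.toFinite D)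
  | succ r ih =>
    intro w D hD hF
    let ι : (Fin r → ℕ) →+ (Fin (r + 1) → ℕ) :=
      { toFun := fun v => Fin.cons 0 v
        map_zero' := by
          ext i; refine Fin.cases ?_ (fun _ => ?_) i <;> simp
        map_add' := fun a b => by
          ext i; refine Fin.cases ?_ (fun _ => ?_) i <;> simp }
    let e : Fin (r + 1) → ℕ := Fin.cons 1 0
    let sl : ℕ → Set (Fin r → ℕ) := fun j => {v | (Fin.cons j v : Fin (r + 1) → ℕ) ∈ D}
    have hcons : ∀ j v, (Fin.cons j v : Fin (r + 1) → ℕ) = ι v + j • e := by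
      intro j v
      ext i; refine Fin.cases ?_ (fun _ => ?_) i <;> simp [ι, e]
    have hwc : ∀ j v, w (Fin.cons j v : Fin (r + 1) → ℕ) = (w.comp ι) v + j * w e := by
      intro j v
      rw [hcons, map_add, map_nsmul, smul_eq_mul]; rfl
    have hinj : ∀ j, Function.Injective (fun v : Fin r → ℕ => (Fin.cons j v : Fin (r + 1) → ℕ)) :=
      fun j => Fin.cons_right_injective (α := fun _ => ℕ) j
    have hsl : ∀ j, IsLowerSet (sl j) := fun j a b hab ha =>
      hD (Fin.cons_le_cons.2 ⟨le_rfl, hab⟩) ha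
    have hanti : Antitone sl := fun i j hij v hv =>
      hD (Fin.cons_le_cons.2 ⟨hij, le_rfl⟩) hv
    have hslF : ∀ j, FF (w.comp ι) (sl j) := fun j =>
      FF_of_image (w' := w) (c := j * w e) (f := fun v => (Fin.cons j v : Fin (r + 1) → ℕ))
        (hinj j).injOn (fun v _ => hwc j v) (hF.mono (by rintro _ ⟨v, hv, rfl⟩; exact hv))
    have hlay : ∀ j, {x | x ∈ D ∧ x 0 = j} =
        (fun v => (Fin.cons j v : Fin (r + 1) → ℕ)) '' sl j := by
      intro j
      ext x
      constructor
      · rintro ⟨hx, rfl⟩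
        refine ⟨Fin.tail x, ?_, Fin.cons_self_tail x⟩
        change (Fin.cons (x 0) (Fin.tail x) : Fin (r + 1) → ℕ) ∈ D
        rwa [Fin.cons_self_tail]
      · rintro ⟨v, hv, rfl⟩
        exact ⟨hv, rfl⟩
    have hlayR : ∀ j, IsRationalSeries (cnt w {x | x ∈ D ∧ x 0 = j}) := by
      intro j
      rw [hlay, cnt_image (w := w.comp ι) (c := j * w e) (hinj j).injOn (fun v _ => hwc j v)]
      exact rat_Xpow_mul _ (ih _ _ (hsl j) (hslF j))
    have hlow : ∀ j, IsRationalSeries (cnt w {x | x ∈ D ∧ x 0 < j}) := by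
      intro j
      induction j with
      | zero => 
        have : {x | x ∈ D ∧ x 0 < 0} = (∅ : Set (Fin (r + 1) → ℕ)) := by ext; simp
        rw [this, cnt_empty]; exact rat_zero
      | succ j ihj =>
        have : {x | x ∈ D ∧ x 0 < j + 1} = {x | x ∈ D ∧ x 0 < j} ∪ {x | x ∈ D ∧ x 0 = j} := by
          ext x
          simp only [Set.mem_ofPred_eq, Set.mem_union, ← and_or_left]
          constructor
          · rintro ⟨h1, h2⟩; exact ⟨h1, by omega⟩
          · rintro ⟨h1, h2⟩; exact ⟨h1, by omega⟩
        rw [this, cnt_disj (hF.mono fun _ h => h.1) (hF.mono fun _ h => h.1)]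
        · exact rat_add ihj (hlayR j)
        · rw [Set.disjoint_left]
          rintro x ⟨_, h1⟩ ⟨_, h2⟩
          omega
    obtain ⟨J, hJ⟩ := stabilize sl hsl hanti
    have hsplit : D = {x | x ∈ D ∧ x 0 < J} ∪ {x | x ∈ D ∧ J ≤ x 0} := by
      ext x
      simp only [Set.mem_ofPred_eq, Set.mem_union, ← and_or_left]
      exact ⟨fun h => ⟨h, by omega⟩, fun h => h.1⟩
    have hhigh : IsRationalSeries (cnt w {x | x ∈ D ∧ J ≤ x 0}) := by
      rcases Nat.eq_zero_or_pos (w e) with h0 | hpos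
      · -- empty
        have : {x | x ∈ D ∧ J ≤ x 0} = (∅ : Set (Fin (r + 1) → ℕ)) := by
          rw [Set.eq_empty_iff_forall_notMem]
          rintro x ⟨hx, hxJ⟩
          have hv : Fin.tail x ∈ sl J := by
            rw [← hJ _ hxJ]
            change (Fin.cons (x 0) (Fin.tail x) : Fin (r + 1) → ℕ) ∈ D
            rwa [Fin.cons_self_tail]
          refine Set.infinite_of_injective_forall_mem
            (f := fun j : ℕ => (Fin.cons (J + j) (Fin.tail x) : Fin (r + 1) → ℕ)) ?_ ?_
            (hF (w.comp ι (Fin.tail x)))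
          · intro a b hab
            have := congrFun hab 0
            simpa using this
          · intro j
            refine ⟨?_, ?_⟩
            · have : Fin.tail x ∈ sl (J + j) := by rw [hJ _ (by omega)]; exact hv
              exact this
            · rw [hwc, h0]; simp
        rw [this, cnt_empty]; exact rat_zero
      · refine rat_div hpos (hlayR J) ?_
        have hshift : (fun x => x + e) '' {x | x ∈ D ∧ J ≤ x 0} = {x | x ∈ D ∧ J + 1 ≤ x 0} := by
          have key : ∀ j v, (Fin.cons j v : Fin (r + 1) → ℕ) + e = Fin.cons (j + 1) v := by
            intro j v
            rw [hcons, hcons, succ_nsmul, add_assoc]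
          ext x
          constructor
          · rintro ⟨y, ⟨hy, hyJ⟩, rfl⟩
            rw [← Fin.cons_self_tail y]
            refine ⟨?_, ?_⟩
            · simp only [key]
              have : Fin.tail y ∈ sl (y 0) := by
                change (Fin.cons (y 0) (Fin.tail y) : Fin (r + 1) → ℕ) ∈ D
                rwa [Fin.cons_self_tail]
              rw [hJ _ hyJ, ← hJ (y 0 + 1) (by omega)] at this
              exact this
            · simp only [key, Fin.cons_zero]; omega
          · rintro ⟨hx, hxJ⟩
            have hx1 : Fin.tail x ∈ sl (x 0) := by
              change (Fin.cons (x 0) (Fin.tail x) : Fin (r + 1) → ℕ) ∈ D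
              rwa [Fin.cons_self_tail]
            refine ⟨Fin.cons (x 0 - 1) (Fin.tail x), ⟨?_, ?_⟩, ?_⟩
            · exact hanti (show x 0 - 1 ≤ x 0 by omega) hx1
            · simp only [Fin.cons_zero]; omega
            · simp only [key]
              rw [show x 0 - 1 + 1 = x 0 by omega, Fin.cons_self_tail]
        have hs2 : {x | x ∈ D ∧ J ≤ x 0} =
            {x | x ∈ D ∧ J + 1 ≤ x 0} ∪ {x | x ∈ D ∧ x 0 = J} := by
          ext x
          simp only [Set.mem_ofPred_eq, Set.mem_union, ← and_or_left]
          constructor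
          · rintro ⟨h1, h2⟩; exact ⟨h1, by omega⟩
          · rintro ⟨h1, h2⟩; exact ⟨h1, by omega⟩
        have := cnt_image (w := w) (w' := w) (c := w e) (f := fun x => x + e)
          (D := {x | x ∈ D ∧ J ≤ x 0}) (add_left_injective e).injOn (fun d _ => map_add w d e)
        rw [← this, hshift, ← cnt_disj (hF.mono fun _ h => h.1) (hF.mono fun _ h => h.1), ← hs2]
        rw [Set.disjoint_left]
        rintro x ⟨_, h1⟩ ⟨_, h2⟩
        omega
    rw [hsplit, cnt_disj (hF.mono fun _ h => h.1) (hF.mono fun _ h => h.1)]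
    · exact rat_add (hlow J) hhigh
    · rw [Set.disjoint_left]
      rintro x ⟨_, h1⟩ ⟨_, h2⟩
      omega

section Semilinear

variable {M : Type*} [AddCommMonoid M]

theorem rat_linear_diff {r : ℕ} (w : M →+ ℕ) (a : M) (f : (Fin r → ℕ) →+ M) (U : Set M)
    (hU : ∀ m ∈ U, ∀ v, m + f v ∈ U) (hF : FF w (Set.range (fun v => a + f v) \ U)) :
    IsRationalSeries (cnt w (Set.range (fun v => a + f v) \ U)) := by
  let D : Set (Fin r → ℕ) := {v | a + f v ∉ U ∧ ∀ v', a + f v' = a + f v → toLex v ≤ toLex v'}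
  have hlow : IsLowerSet D := by
    rintro v u huv ⟨h1, h2⟩
    obtain ⟨d, rfl⟩ := exists_add_of_le huv
    refine ⟨fun h => h1 ?_, fun v' hv' => ?_⟩
    · rw [map_add, ← add_assoc]; exact hU _ h _
    · have := h2 (v' + d) (by rw [map_add, map_add, ← add_assoc, ← add_assoc, hv'])
      rw [toLex_add, toLex_add] at this
      exact le_of_add_le_add_right this
  have himg : Set.range (fun v => a + f v) \ U = (fun v => a + f v) '' D := by
    ext m
    constructor
    · rintro ⟨⟨v, rfl⟩, hv⟩
      have hne : {x : Lex (Fin r → ℕ) | a + f (ofLex x) = a + f v}.Nonempty := ⟨toLex v, rfl⟩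
      let x := WellFounded.min (wellFounded_lt (α := Lex (Fin r → ℕ))) _ hne
      have hx : a + f (ofLex x) = a + f v := WellFounded.min_mem (wellFounded_lt) _ hne
      refine ⟨ofLex x, ⟨?_, fun v' hv' => ?_⟩, hx⟩
      · rw [hx]; exact hv
      · exact not_lt.1 (WellFounded.not_lt_min (wellFounded_lt (α := Lex (Fin r → ℕ)))
          {x : Lex (Fin r → ℕ) | a + f (ofLex x) = a + f v} (x := toLex v') (hv'.trans hx))
    · rintro ⟨v, hv, rfl⟩
      exact ⟨⟨v, rfl⟩, hv.1⟩
  have hinj : Set.InjOn (fun v => a + f v) D := fun u hu v hv huv =>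
    toLex.injective (le_antisymm (hu.2 v huv.symm) (hv.2 u huv))
  have hw : ∀ d ∈ D, w (a + f d) = (w.comp f) d + w a := fun d _ => by simp [add_comm]
  rw [himg] at hF ⊢
  rw [cnt_image hinj hw]
  exact rat_Xpow_mul _ (rat_lower r _ D hlow (FF_of_image hinj hw hF))

/-- Finite unions of translates of one finitely generated submonoid. -/
def Ev (A : Set M) : Prop :=
  ∃ (B : Set M) (r : ℕ) (f : (Fin r → ℕ) →+ M), B.Finite ∧ A = B + Set.range f

theorem Ev.rat {A : Set M} (hA : Ev A) (w : M →+ ℕ) (hF : FF w A) : IsRationalSeries (cnt w A) := by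
  obtain ⟨B, r, f, hB, rfl⟩ := hA
  induction B, hB using Set.Finite.induction_on with
  | empty => rw [Set.empty_add, cnt_empty]; exact rat_zero
  | @insert b B _ _ ih =>
    have hins : insert b B + Set.range f = (B + Set.range f) ∪
        (Set.range (fun v => b + f v) \ (B + Set.range f)) := by
      rw [Set.union_sdiff_self, Set.insert_eq, Set.union_add, Set.union_comm, Set.singleton_add,
        ← Set.range_comp]
      rfl
    rw [hins] at hF ⊢
    have h1 := hF.mono Set.subset_union_left
    have h2 := hF.mono Set.subset_union_right
    rw [cnt_disj h1 h2 Set.disjoint_sdiff_right]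
    refine rat_add (ih h1) (rat_linear_diff w b f _ ?_ h2)
    rintro _ ⟨b', hb', _, ⟨v, rfl⟩, rfl⟩ u
    exact ⟨b', hb', f (v + u), ⟨_, rfl⟩, by simp [add_assoc]⟩

theorem Ev.inter [IsCancelAdd M] {A A' : Set M} (hA : Ev A) (hA' : Ev A') : Ev (A ∩ A') := by
  obtain ⟨B, r, f, hB, rfl⟩ := hA
  obtain ⟨B', r', f', hB', rfl⟩ := hA'
  let P := (Fin r → ℕ) × (Fin r' → ℕ)
  let F : P →+ M := f.comp (AddMonoidHom.fst _ _)
  let F' : P →+ M := f'.comp (AddMonoidHom.snd _ _)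
  have hfg : (F.eqLocusM F').FG := AddSubmonoid.fg_eqLocusM F F'
  obtain ⟨s, g, hg⟩ := AddSubmonoid.fg_iff_exists_fin_addMonoidHom.1 hfg
  let X : M → M → Set P := fun b b' => {p | b + F p = b' + F' p}
  let mn : M → M → Set P := fun b b' => {p | Minimal (· ∈ X b b') p}
  have hmn : ∀ b b', (mn b b').Finite := fun b b' =>
    WellQuasiOrderedLE.finite_of_isAntichain (setOfPred_minimal_antichain _)
  refine ⟨⋃ b ∈ B, ⋃ b' ∈ B', (fun p => b + F p) '' mn b b', s, F.comp g, ?_, ?_⟩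
  · exact hB.biUnion fun b _ => hB'.biUnion fun b' _ => (hmn b b').image _
  ext m
  constructor
  · rintro ⟨⟨b, hb, _, ⟨v, rfl⟩, rfl⟩, ⟨b', hb', _, ⟨v', rfl⟩, he⟩⟩
    have hp : ((v, v') : P) ∈ X b b' := he.symm
    obtain ⟨p, hple, hp'⟩ := exists_minimal_le_of_wellFoundedLT (· ∈ X b b') _ hp
    obtain ⟨d, hd⟩ := exists_add_of_le hple
    have hdE : d ∈ F.eqLocusM F' := by
      have h1 : b + F (p + d) = b' + F' (p + d) := by rw [← hd]; exact hp
      have h2 : b + F p = b' + F' p := hp'.1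
      rw [map_add, map_add, ← add_assoc, ← add_assoc, h2] at h1
      exact add_left_cancel h1
    rw [← hg] at hdE
    obtain ⟨u, hu⟩ := hdE
    refine ⟨b + F p, ?_, F d, ⟨u, by rw [← hu]; rfl⟩, ?_⟩
    · simp only [Set.mem_iUnion]
      exact ⟨b, hb, b', hb', p, hp', rfl⟩
    · change b + F p + F d = b + F (v, v')
      rw [hd, map_add, add_assoc]
  · rintro ⟨_, hx, _, ⟨u, rfl⟩, rfl⟩
    simp only [Set.mem_iUnion] at hx
    obtain ⟨b, hb, b', hb', p, hp, rfl⟩ := hx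
    have hu : g u ∈ F.eqLocusM F' := by rw [← hg]; exact ⟨u, rfl⟩
    have hu' : F (g u) = F' (g u) := hu
    have h2 : b + F p = b' + F' p := hp.1
    refine ⟨⟨b, hb, F (p + g u), ⟨_, rfl⟩, ?_⟩, ⟨b', hb', F' (p + g u), ⟨_, rfl⟩, ?_⟩⟩
    · simp [add_assoc]
    · change b' + F' (p + g u) = b + F p + F (g u)
      rw [h2, hu', map_add, add_assoc]

theorem rat_union_Ev [IsCancelAdd M] (w : M →+ ℕ) : ∀ (n : ℕ) (l : List (Set M)), l.length = n →
    (∀ A ∈ l, Ev A) → (∀ A ∈ l, FF w A) →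
    FF w (⋃ A ∈ l, A) ∧ IsRationalSeries (cnt w (⋃ A ∈ l, A)) := by
  intro n
  induction n with
  | zero =>
    intro l hl _ _
    obtain rfl := List.length_eq_zero_iff.1 hl
    have : (⋃ A ∈ ([] : List (Set M)), A) = ∅ := by simp
    rw [this, cnt_empty]
    exact ⟨fun k => by simp, rat_zero⟩
  | succ n ih =>
    intro l hl hE hF
    obtain ⟨A, t, rfl⟩ : ∃ A t, l = A :: t := by
      cases l with
      | nil => simp at hl
      | cons A t => exact ⟨A, t, rfl⟩
    have hlt : t.length = n := by simpa using hl
    have e1 : (⋃ B ∈ A :: t, B) = A ∪ ⋃ B ∈ t, B := by ext; simp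
    have e2 : A ∩ (⋃ B ∈ t, B) = ⋃ B ∈ t.map (fun B => A ∩ B), B := by
      ext x; simp
    obtain ⟨h1, h2⟩ := ih t hlt (fun B hB => hE B (List.mem_cons_of_mem _ hB))
      (fun B hB => hF B (List.mem_cons_of_mem _ hB))
    obtain ⟨h3, h4⟩ := ih (t.map (fun B => A ∩ B)) (by simpa using hlt)
      (fun B hB => by
        obtain ⟨C, hC, rfl⟩ := List.mem_map.1 hB
        exact (hE A List.mem_cons_self).inter (hE C (List.mem_cons_of_mem _ hC)))
      (fun B hB => by
        obtain ⟨C, hC, rfl⟩ := List.mem_map.1 hB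
        exact (hF A List.mem_cons_self).mono Set.inter_subset_left)
    have hFA := hF A List.mem_cons_self
    rw [e1]
    refine ⟨hFA.union h1, ?_⟩
    have := cnt_union_add_inter hFA h1
    rw [eq_sub_of_add_eq this, e2]
    exact rat_sub (rat_add ((hE A List.mem_cons_self).rat w hFA) h2) h4

theorem rat_semilinear [IsCancelAdd M] (w : M →+ ℕ) {A : Set M} (hA : IsSemilinearSet A)
    (hF : FF w A) : IsRationalSeries (cnt w A) := by
  obtain ⟨S, hS, rfl⟩ := isSemilinearSet_iff.1 hA
  have e : ⋃₀ (S : Set (Set M)) = ⋃ A ∈ S.toList, A := by ext; simp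
  have hE : ∀ A ∈ S.toList, Ev A := by
    intro A hA
    obtain ⟨a, r, f, h⟩ := isLinearSet_iff_exists_fin_addMonoidHom.1 (hS A (by simpa using hA))
    exact ⟨{a}, r, f, Set.finite_singleton a, by rw [h, Set.singleton_add]; rfl⟩
  have hFF : ∀ A ∈ S.toList, FF w A := fun A hA =>
    hF.mono (Set.subset_sUnion_of_mem (by simpa using hA))
  rw [e]
  exact (rat_union_Ev w _ _ rfl hE hFF).2

/-- Values of nonempty paths with intermediate states in `K`. -/
inductive PathVal {Q : Type*} (E : Q → Q → Set M) (K : Set Q) : Q → Q → M → Prop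
  | edge {i j m} : m ∈ E i j → PathVal E K i j m
  | cons {i k j m m'} : m ∈ E i k → k ∈ K → PathVal E K k j m' → PathVal E K i j (m + m')

variable {Q : Type*} {E : Q → Q → Set M}

theorem PathVal.mono {K L : Set Q} (h : K ⊆ L) {i j m} (hp : PathVal E K i j m) :
    PathVal E L i j m := by
  induction hp with
  | edge h1 => exact .edge h1
  | cons h1 h2 _ ih => exact .cons h1 (h h2) ih

theorem PathVal.trans {K : Set Q} {i k j m m'} (h : PathVal E K i k m) (hk : k ∈ K)
    (h' : PathVal E K k j m') : PathVal E K i j (m + m') := by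
  induction h with
  | edge h1 => exact .cons h1 hk h'
  | cons h1 h2 _ ih => rw [add_assoc]; exact .cons h1 h2 (ih hk h')

theorem pathVal_insert (K : Set Q) (q i j : Q) :
    {m | PathVal E (insert q K) i j m} = {m | PathVal E K i j m} ∪
      ({m | PathVal E K i q m} + (AddSubmonoid.closure {m | PathVal E K q q m} : Set M) +
        {m | PathVal E K q j m}) := by
  ext m
  constructor
  · intro h
    change PathVal E (insert q K) i j m at h
    induction h with
    | edge h1 => exact Or.inl (.edge h1)
    | @cons i k j m m' h1 h2 _ ih =>
      rcases h2 with rfl | h2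
      · right
        rcases ih with ih | ⟨_, ⟨a, ha, b, hb, rfl⟩, c, hc, rfl⟩
        · exact ⟨m + 0, ⟨m, .edge h1, 0, zero_mem _, rfl⟩, m', ih, by simp⟩
        · exact ⟨m + (a + b), ⟨m, .edge h1, a + b,
            add_mem (AddSubmonoid.subset_closure ha) hb, rfl⟩, c, hc, by simp [add_assoc]⟩
      · rcases ih with ih | ⟨_, ⟨a, ha, b, hb, rfl⟩, c, hc, rfl⟩
        · exact Or.inl (.cons h1 h2 ih)
        · exact Or.inr ⟨m + a + b, ⟨m + a, .cons h1 h2 ha, b, hb, rfl⟩, c, hc,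
            by simp [add_assoc]⟩
  · rintro (h | ⟨_, ⟨a, ha, b, hb, rfl⟩, c, hc, rfl⟩)
    · exact PathVal.mono (Set.subset_insert _ _) h
    · have hq : q ∈ insert q K := Set.mem_insert _ _
      have hc' : PathVal E (insert q K) q j c := PathVal.mono (Set.subset_insert _ _) hc
      have ha' : PathVal E (insert q K) i q a := PathVal.mono (Set.subset_insert _ _) ha
      have hab : PathVal E (insert q K) i q (a + b) := by
        clear hc hc' ha
        induction hb using AddSubmonoid.closure_induction generalizing a with
        | mem x hx => exact ha'.trans hq (PathVal.mono (Set.subset_insert _ _) hx)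
        | zero => simpa using ha'
        | add x y _ _ h1 h2 =>
          rw [← add_assoc]
          exact h2 _ (h1 _ ha')
      exact hab.trans hq hc'

theorem pathVal_semilinear [Finite Q] (hE : ∀ i j, IsSemilinearSet (E i j)) (K : Set Q) :
    ∀ i j, IsSemilinearSet {m | PathVal E K i j m} := by
  induction K, Set.toFinite K using Set.Finite.induction_on with
  | empty =>
    intro i j
    convert hE i j using 1
    ext m
    constructor
    · intro h
      cases h with
      | edge h => exact h
      | cons _ h _ => exact absurd h (Set.notMem_empty _)
    · exact fun h => .edge h
  | @insert q K _ _ ih =>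
    intro i j
    rw [pathVal_insert]
    exact (ih i j).union (((ih i q).add (ih q q).closure).add (ih q j))

end Semilinear

section Group

variable {G : Type*} [Group G] {n : ℕ} {N : Subgroup G}

theorem cosetSet_semilinear (φ : Multiplicative (Fin n → ℤ) →* G) (a b : G) (H : Subgroup G) :
    IsSemilinearSet {m : (Fin n → ℤ) × ℕ | a * φ (Multiplicative.ofAdd m.1) * b ∈ H} := by
  by_cases hne : ∃ z0, a * φ (Multiplicative.ofAdd z0) * b ∈ H
  swap
  · push Not at hne
    have : {m : (Fin n → ℤ) × ℕ | a * φ (Multiplicative.ofAdd m.1) * b ∈ H} = ∅ := by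
      ext m; simp [hne]
    rw [this]; exact .empty
  obtain ⟨z0, hz0⟩ := hne
  let K : AddSubgroup (Fin n → ℤ) :=
    { carrier := {z | a * φ (Multiplicative.ofAdd z) * a⁻¹ ∈ H}
      zero_mem' := by simp
      add_mem' := fun {x y} hx hy => by
        have := H.mul_mem hx hy
        simpa [mul_assoc] using this
      neg_mem' := fun {x} hx => by
        have := H.inv_mem hx
        simpa [mul_assoc] using this }
  have hK : K.toAddSubmonoid.FG := by
    rw [← AddSubgroup.fg_iff_addSubmonoid_fg]
    have := IsNoetherian.noetherian (AddSubgroup.toIntSubmodule K)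
    rw [Submodule.fg_iff_addSubgroup_fg] at this
    simpa using this
  have h1 : IsLinearSet (z0 +ᵥ (K.toAddSubmonoid : Set (Fin n → ℤ))) := (IsLinearSet.of_fg hK).vadd z0
  have h2 := (h1.image (AddMonoidHom.inl (Fin n → ℤ) ℕ)).add
    ((IsLinearSet.univ (M := ℕ)).image (AddMonoidHom.inr (Fin n → ℤ) ℕ))
  convert h2.isSemilinearSet using 1
  ext ⟨z, k⟩
  constructor
  · intro hz
    refine ⟨(z, 0), ⟨z, ⟨z - z0, ?_, by simp⟩, rfl⟩, (0, k), ⟨k, trivial, rfl⟩, by simp⟩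
    change a * φ (Multiplicative.ofAdd (z - z0)) * a⁻¹ ∈ H
    have := mul_mem hz (inv_mem hz0)
    simpa [mul_assoc, ofAdd_sub, div_eq_mul_inv] using this
  · rintro ⟨_, ⟨_, ⟨y, hy, rfl⟩, rfl⟩, _, ⟨k', _, rfl⟩, h⟩
    have hz : z0 + y = z := by simpa using congrArg Prod.fst h
    have hy' : a * φ (Multiplicative.ofAdd y) * a⁻¹ ∈ H := hy
    have := mul_mem hy' hz0
    change a * φ (Multiplicative.ofAdd z) * b ∈ H
    rw [← hz, add_comm]
    simpa [mul_assoc] using this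

/-- Values of words leading from the coset of `1` to the coset `c`. -/
def T {Q : Type*} (φ : Multiplicative (Fin n → ℤ) →* G) (t : Q → G) (S : Finset G) (ω : G → ℕ)
    (i c : Q) : Set ((Fin n → ℤ) × ℕ) :=
  {m | ∃ l : List G, (∀ x ∈ l, x ∈ S) ∧ t i * l.prod = φ (Multiplicative.ofAdd m.1) * t c ∧
    (l.map ω).sum = m.2}

theorem T_semilinear [N.Normal] [Finite (G ⧸ N)] (φ : Multiplicative (Fin n → ℤ) →* G)
    (hinj : Function.Injective φ) (hrange : ∀ g, g ∈ N ↔ ∃ z, φ z = g) (t : G ⧸ N → G)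
    (ht : ∀ q, (t q : G ⧸ N) = q) (S : Finset G) (ω : G → ℕ) (i c : G ⧸ N) :
    IsSemilinearSet (T φ t S ω i c) := by
  have hmk : ∀ z, ((φ z : G) : G ⧸ N) = 1 := fun z =>
    (QuotientGroup.eq_one_iff _).2 ((hrange _).2 ⟨z, rfl⟩)
  have hα : ∀ (q : G ⧸ N) (s : G), ∃ z : Fin n → ℤ,
      t q * s = φ (Multiplicative.ofAdd z) * t (q * (s : G ⧸ N)) := by
    intro q s
    have : t q * s * (t (q * (s : G ⧸ N)))⁻¹ ∈ N := by
      rw [← QuotientGroup.eq_one_iff]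
      simp [ht]
    obtain ⟨z, hz⟩ := (hrange _).1 this
    refine ⟨Multiplicative.toAdd z, ?_⟩
    rw [ofAdd_toAdd, hz, inv_mul_cancel_right]
  choose α hα using hα
  let E : G ⧸ N → G ⧸ N → Set ((Fin n → ℤ) × ℕ) := fun i j =>
    (fun s => (α i s, ω s)) '' {s | s ∈ S ∧ i * (s : G ⧸ N) = j}
  have hE : ∀ i j, IsSemilinearSet (E i j) := fun i j =>
    .of_finite ((S.finite_toSet.subset fun s hs => hs.1).image _)
  have hstart : ({m | m.2 = 0 ∧ t i = φ (Multiplicative.ofAdd m.1) * t c} :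
      Set ((Fin n → ℤ) × ℕ)).Finite := by
    apply Set.Subsingleton.finite
    rintro ⟨z, k⟩ ⟨hk, hz⟩ ⟨z', k'⟩ ⟨hk', hz'⟩
    have := hinj (mul_right_cancel (hz.symm.trans hz'))
    simp only at hk hk'
    rw [Prod.mk.injEq]
    exact ⟨Multiplicative.ofAdd.injective this, hk.trans hk'.symm⟩
  have key1 : ∀ i j m, PathVal E Set.univ i j m → m ∈ T φ t S ω i j := by
    intro i j m h
    induction h with
    | @edge i j m h =>
      obtain ⟨s, ⟨hs, rfl⟩, rfl⟩ := h
      exact ⟨[s], by simpa using hs, by simpa using hα i s, by simp⟩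
    | @cons i k j m m' h _ _ ih =>
      obtain ⟨s, ⟨hs, rfl⟩, rfl⟩ := h
      obtain ⟨l, hl, hp, hw⟩ := ih
      refine ⟨s :: l, ?_, ?_, ?_⟩
      · simpa using ⟨hs, hl⟩
      · rw [List.prod_cons, ← mul_assoc, hα, mul_assoc, hp, ← mul_assoc, ← map_mul, ← ofAdd_add]
        rfl
      · simp [hw]
  have key2 : ∀ (l : List G) (i j : G ⧸ N) (z : Fin n → ℤ), (∀ x ∈ l, x ∈ S) → l ≠ [] →
      t i * l.prod = φ (Multiplicative.ofAdd z) * t j →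
      PathVal E Set.univ i j (z, (l.map ω).sum) := by
    intro l
    induction l with
    | nil => intro _ _ _ _ h; exact absurd rfl h
    | cons s l ih =>
      intro i j z hl _ hp
      have hs : s ∈ S := hl s List.mem_cons_self
      have hl' : ∀ x ∈ l, x ∈ S := fun x hx => hl x (List.mem_cons_of_mem _ hx)
      rw [List.prod_cons, ← mul_assoc, hα, mul_assoc] at hp
      by_cases hnil : l = []
      · subst hnil
        rw [List.prod_nil, mul_one] at hp
        have hj : i * (s : G ⧸ N) = j := by
          have := congrArg (fun g : G => (g : G ⧸ N)) hp
          simpa [hmk, ht] using this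
        rw [hj] at hp
        have hz : α i s = z := Multiplicative.ofAdd.injective (hinj (mul_right_cancel hp))
        refine .edge ⟨s, ⟨hs, hj⟩, ?_⟩
        simp [hz]
      · have hp2 : t (i * (s : G ⧸ N)) * l.prod = φ (Multiplicative.ofAdd (z - α i s)) * t j := by
          rw [sub_eq_add_neg, add_comm, ofAdd_add, ofAdd_neg, map_mul, map_inv, mul_assoc, ← hp,
            inv_mul_cancel_left]
        have := ih _ _ _ hl' hnil hp2
        have h2 := PathVal.cons (E := E) (K := Set.univ) (i := i) (m := (α i s, ω s))
          ⟨s, ⟨hs, rfl⟩, rfl⟩ trivial this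
        convert h2 using 1
        simp
  have hT : T φ t S ω i c = {m | PathVal E Set.univ i c m} ∪
      {m | m.2 = 0 ∧ t i = φ (Multiplicative.ofAdd m.1) * t c} := by
    ext ⟨z, k⟩
    constructor
    · rintro ⟨l, hl, hp, hw⟩
      simp only at hp hw
      subst hw
      by_cases hnil : l = []
      · subst hnil
        right
        exact ⟨by simp, by simpa using hp⟩
      · left
        exact key2 l i c z hl hnil hp
    · rintro (h | ⟨hk, hz⟩)
      · exact key1 _ _ _ h
      · exact ⟨[], by simp, by simpa using hz, by simpa using hk.symm⟩
  rw [hT]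
  exact (pathVal_semilinear hE _ i c).union (.of_finite hstart)

theorem length_le_sum (S : Finset G) (ω : G → ℕ) (hω : ∀ s ∈ S, 0 < ω s) (l : List G)
    (hl : ∀ x ∈ l, x ∈ S) : l.length ≤ (l.map ω).sum := by
  induction l with
  | nil => simp
  | cons s l ih =>
    have h1 := hω s (hl s List.mem_cons_self)
    have h2 := ih fun x hx => hl x (List.mem_cons_of_mem _ hx)
    simp only [List.length_cons, List.map_cons, List.sum_cons]
    omega

theorem T_FF {Q : Type*} (φ : Multiplicative (Fin n → ℤ) →* G)
    (hinj : Function.Injective φ) (t : Q → G) (S : Finset G) (ω : G → ℕ)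
    (hω : ∀ s ∈ S, 0 < ω s) (i c : Q) : FF Prod.snd (T φ t S ω i c) := by
  intro k
  have hfin : {l : List S | l.length ≤ k}.Finite := List.finite_length_le S k
  refine Set.Finite.of_finite_image
    (f := fun m : (Fin n → ℤ) × ℕ => φ (Multiplicative.ofAdd m.1)) ?_ ?_
  · refine (hfin.image fun l => t i * (l.map Subtype.val).prod * (t c)⁻¹).subset ?_
    rintro _ ⟨⟨z, k⟩, ⟨⟨l, hl, hp, hw⟩, rfl⟩, rfl⟩
    lift l to List S using hl
    refine ⟨l, ?_, ?_⟩
    · have := length_le_sum S ω hω (l.map Subtype.val) (fun x hx => by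
        obtain ⟨y, _, rfl⟩ := List.mem_map.1 hx
        exact y.2)
      simp only at hw
      change l.length ≤ k
      rw [← hw]
      simpa using this
    · simp only at hp ⊢
      rw [hp, mul_inv_cancel_right]
  · rintro ⟨z, k⟩ ⟨_, hk⟩ ⟨z', k'⟩ ⟨_, hk'⟩ h
    simp only at hk hk'
    rw [Prod.mk.injEq]
    exact ⟨Multiplicative.ofAdd.injective (hinj h), hk.trans hk'.symm⟩

end Group

end RelGrowth

open RelGrowth Pointwise

/-- The relative growth series of any subgroup of a finitely generated virtually abelian
group is rational, for any finite weighted monoid generating set. -/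
theorem relative_growth_series_rational {G : Type*} [Group G]
    (n : ℕ) (N : Subgroup G) (hN : N.Normal) (hNfin : N.FiniteIndex)
    (hNiso : Nonempty (N ≃* Multiplicative (Fin n → ℤ)))
    (S : Finset G) (hS : Submonoid.closure (S : Set G) = ⊤)
    (ω : G → ℕ) (hω : ∀ s ∈ S, 0 < ω s)
    (H : Subgroup G) :
    IsRationalSeries (PowerSeries.mk fun k =>
      (Nat.card {h : H // wordWeight (S : Set G) ω (h : G) = k} : ℤ)) := by
  classical
  obtain ⟨e⟩ := hNiso
  let φ : Multiplicative (Fin n → ℤ) →* G := N.subtype.comp e.symm.toMonoidHom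
  have hinj : Function.Injective φ := N.subtype_injective.comp e.symm.injective
  have hrange : ∀ g, g ∈ N ↔ ∃ z, φ z = g := by
    intro g
    constructor
    · intro hg
      exact ⟨e ⟨g, hg⟩, by simp [φ]⟩
    · rintro ⟨z, rfl⟩
      exact (e.symm z).2
  let t : G ⧸ N → G := Quotient.out
  have ht : ∀ q, (t q : G ⧸ N) = q := fun q => Quotient.out_eq' q
  have hmk : ∀ z, ((φ z : G) : G ⧸ N) = 1 := fun z =>
    (QuotientGroup.eq_one_iff _).2 ((hrange _).2 ⟨z, rfl⟩)
  have : Finite (G ⧸ N) := inferInstance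
  have := Fintype.ofFinite (G ⧸ N)
  let gm : G ⧸ N → (Fin n → ℤ) → G := fun c z => (t 1)⁻¹ * φ (Multiplicative.ofAdd z) * t c
  let W : G → Set ℕ := fun g =>
    {k | ∃ l : List G, (∀ x ∈ l, x ∈ (S : Set G)) ∧ l.prod = g ∧ (l.map ω).sum = k}
  have hWne : ∀ g, (W g).Nonempty := by
    intro g
    have hg : g ∈ Submonoid.closure (S : Set G) := hS ▸ Submonoid.mem_top g
    obtain ⟨l, hl, hp⟩ := Submonoid.exists_list_of_mem_closure hg
    exact ⟨_, l, hl, hp, rfl⟩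
  have hTW : ∀ c z k, (z, k) ∈ T φ t S ω 1 c ↔ k ∈ W (gm c z) := by
    intro c z k
    constructor
    · rintro ⟨l, hl, hp, hw⟩
      refine ⟨l, hl, ?_, hw⟩
      simp only [gm]
      rw [mul_assoc, ← hp, inv_mul_cancel_left]
    · rintro ⟨l, hl, hp, hw⟩
      refine ⟨l, hl, ?_, hw⟩
      rw [hp]
      simp only [gm]
      rw [mul_assoc, mul_inv_cancel_left]
  let up : Set ((Fin n → ℤ) × ℕ) :=
    ((0, 1) : (Fin n → ℤ) × ℕ) +ᵥ
      (AddSubmonoid.closure {((0, 1) : (Fin n → ℤ) × ℕ)} : Set ((Fin n → ℤ) × ℕ))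
  have hup : IsSemilinearSet up :=
    (IsLinearSet.closure_of_finite (Set.finite_singleton _)).isSemilinearSet.vadd _
  have hup' : ∀ z k, (z, k) ∈ up ↔ z = 0 ∧ 0 < k := by
    intro z k
    constructor
    · rintro ⟨m, hm, h⟩
      obtain ⟨j, rfl⟩ := AddSubmonoid.mem_closure_singleton.1 hm
      simp only [vadd_eq_add, Prod.smul_mk, smul_zero, smul_eq_mul, mul_one, Prod.mk_add_mk,
        add_zero, Prod.mk.injEq] at h
      exact ⟨h.1.symm, by omega⟩
    · rintro ⟨rfl, hk⟩
      refine ⟨(0, k - 1), AddSubmonoid.mem_closure_singleton.2 ⟨k - 1, by simp⟩, ?_⟩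
      simp only [vadd_eq_add, Prod.mk_add_mk, add_zero, Prod.mk.injEq, true_and]
      omega
  let A : G ⧸ N → Set ((Fin n → ℤ) × ℕ) := fun c =>
    (T φ t S ω 1 c \ (T φ t S ω 1 c + up)) ∩
      {m | (t 1)⁻¹ * φ (Multiplicative.ofAdd m.1) * t c ∈ H}
  have hTs := fun c => T_semilinear φ hinj hrange t ht S ω 1 c
  have hAs : ∀ c, IsSemilinearSet (A c) := fun c =>
    ((hTs c).sdiff ((hTs c).add hup)).inter (cosetSet_semilinear φ _ _ H)
  have hAF : ∀ c, FF Prod.snd (A c) := fun c =>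
    (T_FF φ hinj t S ω hω 1 c).mono fun m hm => hm.1.1
  have hA : ∀ c z k, (z, k) ∈ A c ↔ gm c z ∈ H ∧ wordWeight (S : Set G) ω (gm c z) = k := by
    intro c z k
    have h2 : (z, k) ∈ T φ t S ω 1 c + up ↔ ∃ k' < k, k' ∈ W (gm c z) := by
      constructor
      · rintro ⟨⟨z', k'⟩, h1, ⟨z'', k''⟩, h3, h4⟩
        rw [hup'] at h3
        obtain ⟨rfl, h3⟩ := h3
        simp only [Prod.mk_add_mk, add_zero, Prod.mk.injEq] at h4
        obtain ⟨rfl, h4⟩ := h4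
        exact ⟨k', by omega, (hTW _ _ _).1 h1⟩
      · rintro ⟨k', hk, hW⟩
        refine ⟨(z, k'), (hTW _ _ _).2 hW, (0, k - k'), (hup' _ _).2 ⟨rfl, by omega⟩, ?_⟩
        simp only [Prod.mk_add_mk, add_zero, Prod.mk.injEq, true_and]
        omega
    have h3 : wordWeight (S : Set G) ω (gm c z) = sInf (W (gm c z)) := rfl
    constructor
    · rintro ⟨⟨h4, h5⟩, h6⟩
      refine ⟨h6, ?_⟩
      rw [hTW] at h4
      rw [h2] at h5
      rw [h3]
      refine le_antisymm (Nat.sInf_le h4) ?_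
      by_contra hlt
      exact h5 ⟨_, not_le.1 hlt, Nat.sInf_mem (hWne _)⟩
    · rintro ⟨h6, rfl⟩
      refine ⟨⟨(hTW _ _ _).2 (Nat.sInf_mem (hWne _)), ?_⟩, h6⟩
      rw [h2]
      rintro ⟨k', hk', hW⟩
      exact Nat.notMem_of_lt_sInf hk' hW
  have hsum : (PowerSeries.mk fun k =>
      (Nat.card {h : H // wordWeight (S : Set G) ω (h : G) = k} : ℤ)) =
      ∑ c, cnt Prod.snd (A c) := by
    ext k
    rw [map_sum]
    simp only [cnt, PowerSeries.coeff_mk]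
    have hfin : ∀ c, Finite {m // m ∈ A c ∧ m.2 = k} := fun c => (hAF c k).to_subtype
    have hcard : Nat.card {h : H // wordWeight (S : Set G) ω (h : G) = k} =
        Nat.card (Σ c, {m // m ∈ A c ∧ m.2 = k}) := by
      symm
      let F : (Σ c, {m // m ∈ A c ∧ m.2 = k}) →
          {h : H // wordWeight (S : Set G) ω (h : G) = k} := fun x =>
        ⟨⟨gm x.1 x.2.1.1, ((hA x.1 x.2.1.1 x.2.1.2).1 x.2.2.1).1⟩,
          ((hA x.1 x.2.1.1 x.2.1.2).1 x.2.2.1).2.trans x.2.2.2⟩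
      refine Nat.card_congr (Equiv.ofBijective F ⟨?_, ?_⟩)
      · rintro ⟨c, ⟨⟨z, j⟩, h1, h2⟩⟩ ⟨c', ⟨⟨z', j'⟩, h1', h2'⟩⟩ h
        have hg : gm c z = gm c' z' := congrArg (fun x => (x.1 : G)) h
        have hc : c = c' := by
          have := congrArg (fun g : G => (g : G ⧸ N)) hg
          simpa [gm, hmk, ht] using this
        subst hc
        have hz : z = z' := Multiplicative.ofAdd.injective
          (hinj (mul_left_cancel (mul_right_cancel hg)))
        subst hz
        simp only at h2 h2'
        subst h2
        subst h2'
        rfl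
      · rintro ⟨⟨h, hh⟩, hk⟩
        have : t 1 * h * (t (h : G ⧸ N))⁻¹ ∈ N := by
          rw [← QuotientGroup.eq_one_iff]
          simp [ht]
        obtain ⟨z, hz⟩ := (hrange _).1 this
        have hg : gm (h : G ⧸ N) (Multiplicative.toAdd z) = h := by
          simp only [gm, ofAdd_toAdd, hz]
          group
        refine ⟨⟨(h : G ⧸ N), ⟨(Multiplicative.toAdd z, k), ?_, rfl⟩⟩, ?_⟩
        · rw [hA, hg]; exact ⟨hh, hk⟩
        · exact Subtype.ext (Subtype.ext hg)
    rw [hcard, Nat.card_sigma]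
    push_cast
    rfl
  rw [hsum]
  exact rat_sum _ _ fun c _ => rat_semilinear (AddMonoidHom.snd (Fin n → ℤ) ℕ) (hAs c) (hAF c)
end

section
/- Let G be a finitely generated virtually abelian group, let S be a finite set generating G as a monoid with weight function ω : S → ℕ₊, and let H₁, …, H_k be finitely many subgroups of G. Then the weighted growth series of the union H₁ ∪ ⋯ ∪ H_k relative to G, namely ∑_{n≥0} #{g ∈ H₁ ∪ ⋯ ∪ H_k : ω(g) = n} zⁿ, is a rational power series. -/
/-! ### Part 1: rational series -/

namespace UnionGrowth

open Set Pointwise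

theorem isRat_zero : IsRationalSeries 0 := ⟨0, 1, one_ne_zero, by simp⟩

theorem isRat_add {f g : PowerSeries ℤ} (hf : IsRationalSeries f) (hg : IsRationalSeries g) :
    IsRationalSeries (f + g) := by
  obtain ⟨p, q, hq, h⟩ := hf
  obtain ⟨p', q', hq', h'⟩ := hg
  refine ⟨p * q' + p' * q, q * q', mul_ne_zero hq hq', ?_⟩
  push_cast
  rw [← h, ← h']
  ring

theorem isRat_neg {f : PowerSeries ℤ} (hf : IsRationalSeries f) : IsRationalSeries (-f) := by
  obtain ⟨p, q, hq, h⟩ := hf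
  refine ⟨-p, q, hq, ?_⟩
  push_cast
  rw [← h]
  ring

theorem isRat_sub {f g : PowerSeries ℤ} (hf : IsRationalSeries f) (hg : IsRationalSeries g) :
    IsRationalSeries (f - g) := by
  rw [sub_eq_add_neg]
  exact isRat_add hf (isRat_neg hg)

theorem isRat_X_pow_mul {f : PowerSeries ℤ} (hf : IsRationalSeries f) (c : ℕ) :
    IsRationalSeries (PowerSeries.X ^ c * f) := by
  obtain ⟨p, q, hq, h⟩ := hf
  refine ⟨Polynomial.X ^ c * p, q, hq, ?_⟩
  push_cast
  rw [← h]
  ring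

theorem isRat_of_shift {f g : PowerSeries ℤ} (hg : IsRationalSeries g) {c : ℕ} (hc : 0 < c)
    (h : f = g + PowerSeries.X ^ c * f) : IsRationalSeries f := by
  obtain ⟨p, q, hq, h'⟩ := hg
  refine ⟨p, (1 - Polynomial.X ^ c) * q, mul_ne_zero ?_ hq, ?_⟩
  · intro h0
    have := congrArg (fun r => Polynomial.coeff r 0) h0
    simp [Polynomial.coeff_X_pow, hc.ne] at this
  · push_cast
    rw [← h']
    linear_combination (q : PowerSeries ℤ) * h

/-- Elements of `s` of weight `m`. -/
def fib {M : Type*} (w : M → ℕ) (s : Set M) (m : ℕ) : Set M := {x | x ∈ s ∧ w x = m}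

/-- The growth series of `s` with respect to `w`. -/
noncomputable def gser {M : Type*} (w : M → ℕ) (s : Set M) : PowerSeries ℤ :=
  PowerSeries.mk fun m => ((fib w s m).ncard : ℤ)

/-- `s` has finite fibres and rational growth. -/
def RatG {M : Type*} (w : M → ℕ) (s : Set M) : Prop :=
  (∀ m, (fib w s m).Finite) ∧ IsRationalSeries (gser w s)

section
variable {M M' : Type*} {w : M → ℕ} {w' : M' → ℕ} {s t : Set M}

theorem fib_mono (h : s ⊆ t) (m : ℕ) : fib w s m ⊆ fib w t m := fun _ hx => ⟨h hx.1, hx.2⟩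

theorem RatG.empty : RatG w (∅ : Set M) := by
  have h : ∀ m, fib w (∅ : Set M) m = ∅ := fun m => by ext x; simp [fib]
  refine ⟨fun m => by simp [h], ?_⟩
  convert isRat_zero
  ext m
  simp [gser, h]

theorem gser_union (hs : ∀ m, (fib w s m).Finite) (ht : ∀ m, (fib w t m).Finite) :
    gser w (s ∪ t) = gser w s + gser w t - gser w (s ∩ t) := by
  ext m
  have h1 : fib w (s ∪ t) m = fib w s m ∪ fib w t m := by
    ext x; simp only [fib, mem_union, mem_ofPred_eq]; tauto
  have h2 : fib w (s ∩ t) m = fib w s m ∩ fib w t m := by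
    ext x; simp only [fib, mem_inter_iff, mem_ofPred_eq]; tauto
  have := Set.ncard_union_add_ncard_inter (fib w s m) (fib w t m) (hs m) (ht m)
  simp only [gser, map_sub, map_add, PowerSeries.coeff_mk, h1, h2]
  omega

theorem fin_union (hs : ∀ m, (fib w s m).Finite) (ht : ∀ m, (fib w t m).Finite) (m : ℕ) :
    (fib w (s ∪ t) m).Finite := by
  have h1 : fib w (s ∪ t) m = fib w s m ∪ fib w t m := by
    ext x; simp only [fib, mem_union, mem_ofPred_eq]; tauto
  rw [h1]
  exact (hs m).union (ht m)

theorem RatG.union (hs : RatG w s) (ht : RatG w t) (hst : RatG w (s ∩ t)) : RatG w (s ∪ t) := by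
  refine ⟨fin_union hs.1 ht.1, ?_⟩
  rw [gser_union hs.1 ht.1]
  exact isRat_sub (isRat_add hs.2 ht.2) hst.2

theorem RatG.disjUnion (hs : RatG w s) (ht : RatG w t) (hst : Disjoint s t) : RatG w (s ∪ t) := by
  refine hs.union ht ?_
  rw [disjoint_iff_inter_eq_empty.1 hst]
  exact RatG.empty

theorem RatG.sdiff (hs : RatG w s) (ht : RatG w t) (hst : t ⊆ s) : RatG w (s \ t) := by
  have hf : ∀ m, (fib w (s \ t) m).Finite := fun m => (hs.1 m).subset (fib_mono sdiff_subset m)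
  refine ⟨hf, ?_⟩
  have := gser_union hf ht.1
  rw [sdiff_union_of_subset hst] at this
  have h0 : s \ t ∩ t = ∅ := by ext; simp
  have h1 : gser w (∅ : Set M) = 0 := by
    ext m
    simp [gser, fib]
  rw [h0, h1] at this
  have h2 : gser w (s \ t) = gser w s - gser w t := by rw [this]; ring
  rw [h2]
  exact isRat_sub hs.2 ht.2

theorem fib_image {g : M → M'} {c : ℕ} (hw : ∀ x ∈ s, w' (g x) = c + w x) (m : ℕ) :
    fib w' (g '' s) (c + m) = g '' fib w s m := by
  ext y
  constructor
  · rintro ⟨⟨x, hx, rfl⟩, h⟩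
    rw [hw x hx] at h
    exact ⟨x, ⟨hx, by omega⟩, rfl⟩
  · rintro ⟨x, ⟨hx, h⟩, rfl⟩
    exact ⟨⟨x, hx, rfl⟩, by rw [hw x hx, h]⟩

theorem fib_image_lt {g : M → M'} {c : ℕ} (hw : ∀ x ∈ s, w' (g x) = c + w x) {m : ℕ}
    (hm : m < c) : fib w' (g '' s) m = ∅ := by
  ext y
  simp only [mem_empty_iff_false, iff_false]
  rintro ⟨⟨x, hx, rfl⟩, h⟩
  rw [hw x hx] at h
  omega

theorem gser_image {g : M → M'} {c : ℕ} (hg : InjOn g s) (hw : ∀ x ∈ s, w' (g x) = c + w x) :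
    gser w' (g '' s) = PowerSeries.X ^ c * gser w s := by
  ext m
  rw [PowerSeries.coeff_X_pow_mul']
  split_ifs with h
  · obtain ⟨k, rfl⟩ := Nat.exists_eq_add_of_le h
    simp only [gser, PowerSeries.coeff_mk, fib_image hw, Nat.add_sub_cancel_left]
    rw [Set.InjOn.ncard_image (hg.mono fun x hx => hx.1)]
  · simp [gser, PowerSeries.coeff_mk, fib_image_lt hw (not_le.1 h)]

theorem RatG.image {g : M → M'} {c : ℕ} (hs : RatG w s) (hg : InjOn g s)
    (hw : ∀ x ∈ s, w' (g x) = c + w x) : RatG w' (g '' s) := by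
  refine ⟨fun m => ?_, ?_⟩
  · by_cases h : m < c
    · simp [fib_image_lt hw h]
    · obtain ⟨k, rfl⟩ := Nat.exists_eq_add_of_le (not_lt.1 h)
      rw [fib_image hw]
      exact (hs.1 k).image _
  · rw [gser_image hg hw]
    exact isRat_X_pow_mul hs.2 c

theorem RatG.of_shift {g : M → M} {c : ℕ} (hc : 0 < c) (ht : RatG w t) (hg : InjOn g s)
    (hw : ∀ x ∈ s, w (g x) = c + w x) (heq : s = t ∪ g '' s) (hd : Disjoint t (g '' s)) :
    RatG w s := by
  have hf : ∀ m, (fib w s m).Finite := by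
    intro m
    induction m using Nat.strong_induction_on with
    | _ m ih =>
      have h1 : fib w s m = fib w t m ∪ fib w (g '' s) m := by
        conv_lhs => rw [heq]
        ext x; simp only [fib, mem_union, mem_ofPred_eq]; tauto
      rw [h1]
      refine (ht.1 m).union ?_
      by_cases h : m < c
      · simp [fib_image_lt hw h]
      · obtain ⟨k, rfl⟩ := Nat.exists_eq_add_of_le (not_lt.1 h)
        rw [fib_image hw]
        exact (ih k (by omega)).image _
  have hf' : ∀ m, (fib w (g '' s) m).Finite := fun m =>
    (hf m).subset (fib_mono (by conv_rhs => rw [heq]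
                                exact subset_union_right) m)
  refine ⟨hf, isRat_of_shift ht.2 hc ?_⟩
  have := gser_union ht.1 hf'
  rw [← heq, gser_image hg hw, disjoint_iff_inter_eq_empty.1 hd] at this
  have h1 : gser w (∅ : Set M) = 0 := by
    ext m
    simp [gser, fib]
  rw [h1, sub_zero] at this
  exact this

/-- Inclusion-exclusion: for a class of rational sets closed under intersection, finite unions
are rational. -/
theorem RatG.listUnion (C : Set M → Prop) (hC : ∀ a, C a → RatG w a)
    (hi : ∀ a b, C a → C b → C (a ∩ b)) (l : List (Set M)) (hl : ∀ a ∈ l, C a) :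
    RatG w {x | ∃ a ∈ l, x ∈ a} := by
  induction hn : l.length generalizing l with
  | zero =>
    rw [List.length_eq_zero_iff] at hn
    subst hn
    convert RatG.empty
    simp
  | succ n ih =>
    obtain ⟨a, l, rfl⟩ := List.exists_cons_of_length_eq_add_one hn
    have h1 : {x | ∃ b ∈ a :: l, x ∈ b} = a ∪ {x | ∃ b ∈ l, x ∈ b} := by
      ext x; simp
    rw [h1]
    have hl' : ∀ b ∈ l, C b := fun b hb => hl b (List.mem_cons_of_mem _ hb)
    have ha := hl a List.mem_cons_self
    refine (hC a ha).union (ih l hl' (by simpa using hn)) ?_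
    have h2 : a ∩ {x | ∃ b ∈ l, x ∈ b} = {x | ∃ b ∈ l.map (fun b => a ∩ b), x ∈ b} := by
      ext x; simp; tauto
    rw [h2]
    refine ih _ ?_ (by simpa using hn)
    intro b hb
    obtain ⟨b', hb', rfl⟩ := List.mem_map.1 hb
    exact hi _ _ ha (hl' _ hb')

theorem RatG.sUnion (C : Set M → Prop) (hC : ∀ a, C a → RatG w a)
    (hi : ∀ a b, C a → C b → C (a ∩ b)) (S : Set (Set M)) (hS : S.Finite) (hl : ∀ a ∈ S, C a) :
    RatG w (⋃₀ S) := by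
  have := RatG.listUnion C hC hi hS.toFinset.toList (by simpa using hl)
  convert this using 1
  ext x
  simp

end

end UnionGrowth

/-! ### Part 2: monomial sets and finitely generated modules over monoids -/

namespace UnionGrowth

open Set Pointwise

/-- Every set in a well-quasi-order is covered by finitely many of its elements. -/
theorem exists_finite_min {N : Type*} [PartialOrder N] [WellQuasiOrderedLE N] (s : Set N) :
    ∃ F : Set N, F.Finite ∧ F ⊆ s ∧ ∀ x ∈ s, ∃ m ∈ F, m ≤ x := by
  refine ⟨{x | Minimal (· ∈ s) x}, ?_, fun x hx => hx.1, fun x hx => ?_⟩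
  · apply WellQuasiOrderedLE.finite_of_isAntichain
    exact setOfPred_minimal_antichain _
  · obtain ⟨m, hm, h⟩ := exists_minimal_le_of_wellFoundedLT (· ∈ s) x hx
    exact ⟨m, h, hm⟩

section mono
variable {k : ℕ}

theorem ratG_supp (w : (Fin k → ℕ) →+ ℕ) (hw : ∀ i, 0 < w (Pi.single i 1))
    (T : Finset (Fin k)) : RatG w {v : Fin k → ℕ | ∀ i ∉ T, v i = 0} := by
  classical
  induction T using Finset.induction_on with
  | empty =>
    have h : {v : Fin k → ℕ | ∀ i ∉ (∅ : Finset (Fin k)), v i = 0} = {0} := by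
      ext v; simp [funext_iff]
    rw [h]
    have h0 : fib w {0} 0 = {0} := by
      ext x; simp only [fib, mem_singleton_iff, mem_ofPred_eq]
      exact ⟨fun h => h.1, fun h => ⟨h, by rw [h]; exact map_zero w⟩⟩
    have h1 : ∀ m, fib w {0} (m + 1) = ∅ := by
      intro m
      ext x; simp only [fib, mem_singleton_iff, mem_ofPred_eq, mem_empty_iff_false, iff_false]
      rintro ⟨rfl, h⟩
      simp at h
    refine ⟨fun m => ?_, 1, 1, one_ne_zero, ?_⟩
    · cases m <;> simp [h0, h1]
    · ext m
      cases m <;> simp [gser, h0, h1, PowerSeries.coeff_one]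
  | insert a T ha ih =>
    refine RatG.of_shift (g := fun v => Pi.single a 1 + v) (hw a) ih
      (fun x _ y _ h => add_left_cancel h) (fun x _ => map_add w _ _) ?_ ?_
    · ext v
      simp only [mem_union, mem_image, mem_ofPred_eq, Finset.mem_insert, not_or]
      constructor
      · intro h
        by_cases hv : v a = 0
        · left
          intro i hi
          by_cases hia : i = a
          · rw [hia, hv]
          · exact h i ⟨hia, hi⟩
        · right
          refine ⟨v - Pi.single a 1, fun i hi => by simp [h i hi], ?_⟩
          ext i
          by_cases hia : i = a
          · subst hia; simp; omega
          · simp [hia]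
      · rintro (h | ⟨v, h, rfl⟩) i ⟨hi, hi'⟩
        · exact h i hi'
        · simp [hi, h i ⟨hi, hi'⟩]
    · rw [Set.disjoint_left]
      rintro _ h ⟨v, -, rfl⟩
      have := h a ha
      simp at this

theorem ratG_univ (w : (Fin k → ℕ) →+ ℕ) (hw : ∀ i, 0 < w (Pi.single i 1))
    : RatG w (univ : Set (Fin k → ℕ)) := by
  have := ratG_supp w hw Finset.univ
  simpa using this

theorem ratG_Ici (w : (Fin k → ℕ) →+ ℕ) (hw : ∀ i, 0 < w (Pi.single i 1))
    (a : Fin k → ℕ) : RatG w (Ici a) := by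
  have := (ratG_univ w hw).image (g := fun v => a + v) (w' := w) (c := w a)
    (fun x _ y _ h => add_left_cancel h) (fun x _ => map_add w _ _)
  convert this using 1
  ext v
  simp only [mem_Ici, image_univ, mem_range]
  exact ⟨fun h => ⟨v - a, add_tsub_cancel_of_le h⟩, by rintro ⟨u, rfl⟩; exact le_self_add⟩

theorem ratG_upper (w : (Fin k → ℕ) →+ ℕ) (hw : ∀ i, 0 < w (Pi.single i 1))
    (U : Set (Fin k → ℕ)) (hU : IsUpperSet U) : RatG w U := by
  obtain ⟨F, hF, hFU, hmin⟩ := exists_finite_min U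
  have : RatG w (⋃₀ (Ici '' F)) := by
    refine RatG.sUnion (fun s => ∃ a, s = Ici a) ?_ ?_ _ (hF.image _) ?_
    · rintro _ ⟨a, rfl⟩
      exact ratG_Ici w hw a
    · rintro _ _ ⟨a, rfl⟩ ⟨b, rfl⟩
      exact ⟨a ⊔ b, Ici_inter_Ici⟩
    · rintro _ ⟨a, -, rfl⟩
      exact ⟨a, rfl⟩
  convert this using 1
  ext x
  simp only [sUnion_image, mem_iUnion, mem_Ici, exists_prop]
  exact ⟨hmin x, fun ⟨m, hm, h⟩ => hU h (hFU hm)⟩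

theorem ratG_lower (w : (Fin k → ℕ) →+ ℕ) (hw : ∀ i, 0 < w (Pi.single i 1))
    (D : Set (Fin k → ℕ)) (hD : IsLowerSet D) : RatG w D := by
  have := (ratG_univ w hw).sdiff (ratG_upper w hw Dᶜ hD.compl) (subset_univ _)
  convert this using 1
  ext; simp

end mono

section modules
variable {M : Type*} [AddCommMonoid M] [IsCancelAdd M] (w : M →+ ℕ)

/-- A coset of a finitely generated monoid minus a stable set is rational. -/
theorem ratG_coset_sdiff {k : ℕ} (f : (Fin k → ℕ) →+ M) (hf : ∀ i, 0 < w (f (Pi.single i 1)))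
    (b : M) (Z : Set M) (hZ : ∀ z ∈ Z, ∀ v, z + f v ∈ Z) :
    RatG w ((b +ᵥ range f) \ Z) := by
  let D : Set (Fin k → ℕ) := {v | b + f v ∉ Z ∧ ∀ u, f u = f v → toLex v ≤ toLex u}
  have hD : IsLowerSet D := by
    intro v u huv hv
    obtain ⟨d, rfl⟩ := exists_add_of_le huv
    refine ⟨fun h => hv.1 ?_, fun u' hu' => ?_⟩
    · rw [map_add, ← add_assoc]
      exact hZ _ h d
    · have := hv.2 (u' + d) (by rw [map_add, map_add, hu'])
      rw [toLex_add, toLex_add] at this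
      exact le_of_add_le_add_right this
  have h1 := ratG_lower (w.comp f) hf D hD
  have h2 := h1.image (g := fun v => b + f v) (w' := w) (c := w b) ?_ ?_
  · convert h2 using 1
    ext x
    simp only [mem_sdiff, mem_vadd_set, mem_range, vadd_eq_add, mem_image]
    constructor
    · rintro ⟨⟨_, ⟨v, rfl⟩, rfl⟩, hx⟩
      obtain ⟨m, hm1, hm2⟩ := WellFounded.has_min
        (wellFounded_lt (α := Lex (Fin k → ℕ))) {u | f (ofLex u) = f v} ⟨toLex v, rfl⟩
      have hm1 : f (ofLex m) = f v := hm1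
      refine ⟨ofLex m, ⟨by rwa [hm1], fun u hu => ?_⟩, by rw [hm1]⟩
      exact not_lt.1 (hm2 (toLex u) (hu.trans hm1))
    · rintro ⟨v, hv, rfl⟩
      exact ⟨⟨_, ⟨v, rfl⟩, rfl⟩, hv.1⟩
  · intro u hu v hv huv
    have huv : f u = f v := add_left_cancel huv
    exact toLex.injective (le_antisymm (hu.2 v huv.symm) (hv.2 u huv))
  · intro v _
    exact map_add w _ _

theorem ratG_module {k : ℕ} (f : (Fin k → ℕ) →+ M) (hf : ∀ i, 0 < w (f (Pi.single i 1)))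
    (F : Set M) (hF : F.Finite) : RatG w (F + range f) := by
  induction F, hF using Set.Finite.induction_on with
  | empty => rw [Set.empty_add]; exact RatG.empty
  | @insert b F _ _ ih =>
    have h := ratG_coset_sdiff w f hf b (F + range f) ?_
    · have := h.disjUnion ih disjoint_sdiff_left
      convert this using 1
      rw [sdiff_union_self, Set.insert_eq, Set.union_add]
      congr 1
      ext x
      simp [mem_vadd_set]
    · rintro _ ⟨a, ha, _, ⟨u, rfl⟩, rfl⟩ v
      exact ⟨a, ha, f (u + v), ⟨_, rfl⟩, by simp [add_assoc]⟩

/-- A finitely generated monoid whose nonzero elements have positive weight. -/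
theorem exists_pos_gen (P : AddSubmonoid M) (hP : P.FG) (hpos : ∀ p ∈ P, p ≠ 0 → 0 < w p) :
    ∃ (k : ℕ) (f : (Fin k → ℕ) →+ M), (∀ i, 0 < w (f (Pi.single i 1))) ∧
      range f = (P : Set M) := by
  classical
  obtain ⟨t, rfl⟩ := hP
  let t' := t.erase 0
  let e := t'.equivFin
  let f : (Fin t'.card → ℕ) →+ M :=
    { toFun := fun v => ∑ i, v i • (e.symm i : M)
      map_zero' := by simp
      map_add' := fun u v => by simp [add_smul, Finset.sum_add_distrib] }
  have hs : ∀ i, f (Pi.single i 1) = (e.symm i : M) := by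
    intro i
    change ∑ j, (Pi.single i 1 : Fin t'.card → ℕ) j • (e.symm j : M) = _
    rw [Finset.sum_eq_single i]
    · simp
    · intro j _ hj; simp [hj]
    · simp
  refine ⟨_, f, fun i => ?_, ?_⟩
  · rw [hs]
    have := (e.symm i).2
    rw [Finset.mem_erase] at this
    exact hpos _ (AddSubmonoid.subset_closure this.2) this.1
  · have : AddMonoidHom.mrange f = AddSubmonoid.closure (t : Set M) := by
      apply le_antisymm
      · rintro _ ⟨v, rfl⟩
        change ∑ i, v i • (e.symm i : M) ∈ AddSubmonoid.closure (t : Set M)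
        refine AddSubmonoid.sum_mem _ fun i _ =>
          AddSubmonoid.nsmul_mem _ (AddSubmonoid.subset_closure ?_) (v i)
        exact Finset.mem_of_mem_erase (e.symm i).2
      · rw [AddSubmonoid.closure_le]
        intro x hx
        by_cases h0 : x = 0
        · rw [h0]; exact zero_mem _
        · refine ⟨Pi.single (e ⟨x, Finset.mem_erase.2 ⟨h0, hx⟩⟩) 1, ?_⟩
          rw [hs]; simp
    rw [← this]; rfl

/-- The class of finitely generated modules over positive finitely generated monoids. -/
def Cls (A : Set M) : Prop :=
  ∃ (F : Set M) (P : AddSubmonoid M), F.Finite ∧ P.FG ∧ (∀ p ∈ P, p ≠ 0 → 0 < w p) ∧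
    A = F + (P : Set M)

theorem Cls.ratG {A : Set M} (hA : Cls w A) : RatG w A := by
  obtain ⟨F, P, hF, hP, hpos, rfl⟩ := hA
  obtain ⟨k, f, hf, hr⟩ := exists_pos_gen w P hP hpos
  rw [← hr]
  exact ratG_module w f hf F hF

theorem inter_fg (P Q : AddSubmonoid M) (hP : P.FG) (hQ : Q.FG) :
    (P ⊓ Q).FG ∧ ∀ b c : M, ∃ F : Set M, F.Finite ∧
      (b +ᵥ (P : Set M)) ∩ (c +ᵥ (Q : Set M)) = F + ((P ⊓ Q : AddSubmonoid M) : Set M) := by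
  obtain ⟨k, f, rfl⟩ := AddSubmonoid.fg_iff_exists_fin_addMonoidHom.1 hP
  obtain ⟨l, g, rfl⟩ := AddSubmonoid.fg_iff_exists_fin_addMonoidHom.1 hQ
  let K : AddSubmonoid ((Fin k → ℕ) × (Fin l → ℕ)) :=
    { carrier := {x | f x.1 = g x.2}
      zero_mem' := by simp
      add_mem' := fun {x y} hx hy => by
        simp only [mem_ofPred_eq] at *
        simp [hx, hy] }
  have hK : ∀ x, x ∈ K ↔ f x.1 = g x.2 := fun x => Iff.rfl
  have hKfg : K.FG := by
    refine AddSubmonoid.fg_of_subtractive fun x hx y hxy => ?_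
    rw [hK] at *
    simp only [Prod.fst_add, Prod.snd_add, map_add, hx] at hxy
    exact add_left_cancel hxy
  have hmap : AddMonoidHom.mrange f ⊓ AddMonoidHom.mrange g =
      K.map (f.comp (AddMonoidHom.fst _ _)) := by
    ext x
    simp only [AddSubmonoid.mem_inf, AddMonoidHom.mem_mrange, AddSubmonoid.mem_map]
    constructor
    · rintro ⟨⟨u, hu⟩, ⟨v, hv⟩⟩
      exact ⟨(u, v), by rw [hK]; simp [hu, hv], hu⟩
    · rintro ⟨⟨u, v⟩, h, rfl⟩
      exact ⟨⟨u, rfl⟩, ⟨v, h.symm⟩⟩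
  refine ⟨by rw [hmap]; exact hKfg.map _, fun b c => ?_⟩
  obtain ⟨F, hF, hFs, hmin⟩ := exists_finite_min
    {x : (Fin k → ℕ) × (Fin l → ℕ) | b + f x.1 = c + g x.2}
  refine ⟨(fun x => b + f x.1) '' F, hF.image _, ?_⟩
  rw [hmap]
  ext x
  simp only [mem_inter_iff, mem_vadd_set, vadd_eq_add, SetLike.mem_coe, AddMonoidHom.mem_mrange,
    mem_add, mem_image, AddSubmonoid.mem_map]
  constructor
  · rintro ⟨⟨_, ⟨u, rfl⟩, rfl⟩, ⟨_, ⟨v, rfl⟩, h⟩⟩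
    obtain ⟨m, hm, hle⟩ := hmin (u, v) h.symm
    obtain ⟨d, hd⟩ := exists_add_of_le hle
    have hm' : b + f m.1 = c + g m.2 := hFs hm
    have e1 : u = m.1 + d.1 := congrArg Prod.fst hd
    have e2 : v = m.2 + d.2 := congrArg Prod.snd hd
    refine ⟨_, ⟨m, hm, rfl⟩, _, ⟨d, ?_, rfl⟩, ?_⟩
    · rw [hK]
      rw [e1, e2, map_add, map_add, ← add_assoc, ← add_assoc, hm'] at h
      exact (add_left_cancel h).symm
    · simp [e1, add_assoc]
  · rintro ⟨_, ⟨m, hm, rfl⟩, _, ⟨d, hd, rfl⟩, rfl⟩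
    have hm' : b + f m.1 = c + g m.2 := hFs hm
    rw [hK] at hd
    refine ⟨⟨_, ⟨m.1 + d.1, rfl⟩, ?_⟩, ⟨_, ⟨m.2 + d.2, rfl⟩, ?_⟩⟩
    · simp [add_assoc]
    · simp [← add_assoc, hm', hd]

theorem Cls.inter {A B : Set M} (hA : Cls w A) (hB : Cls w B) : Cls w (A ∩ B) := by
  obtain ⟨F, P, hF, hP, hpos, rfl⟩ := hA
  obtain ⟨F', Q, hF', hQ, hpos', rfl⟩ := hB
  obtain ⟨hfg, h⟩ := inter_fg P Q hP hQ
  choose E hE hE' using h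
  refine ⟨⋃ b ∈ F, ⋃ c ∈ F', E b c, P ⊓ Q,
    hF.biUnion fun b _ => hF'.biUnion fun c _ => hE b c, hfg, fun p hp => hpos p hp.1, ?_⟩
  simp only [iUnion_add, ← hE']
  ext x
  simp only [mem_inter_iff, mem_add, mem_iUnion, mem_vadd_set, vadd_eq_add, exists_prop]
  constructor
  · rintro ⟨⟨b, hb, p, hp, rfl⟩, ⟨c, hc, q, hq, h⟩⟩
    exact ⟨b, hb, c, hc, ⟨p, hp, rfl⟩, ⟨q, hq, h⟩⟩
  · rintro ⟨b, hb, c, hc, ⟨p, hp, rfl⟩, ⟨q, hq, h⟩⟩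
    exact ⟨⟨b, hb, p, hp, rfl⟩, ⟨c, hc, q, hq, h⟩⟩

/-- Semilinear sets with finite fibres have rational growth. -/
theorem semilinear_ratG [IsAddTorsionFree M] {s : Set M} (hs : IsSemilinearSet s)
    (hfin : ∀ m, (fib w s m).Finite) : RatG w s := by
  obtain ⟨S, hS, hlin, rfl⟩ := hs
  refine RatG.sUnion (Cls w) (fun a => Cls.ratG w) (fun a b => Cls.inter w) S hS ?_
  intro A hA
  obtain ⟨a, P, hP, rfl⟩ := isLinearSet_iff_exists_fg_eq_vadd.1 (hlin A hA)
  refine ⟨{a}, P, finite_singleton a, hP, fun p hp hp0 => ?_, by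
    ext x; simp [mem_vadd_set]⟩
  by_contra h
  have hw0 : w p = 0 := by omega
  have hinj : Function.Injective (fun n : ℕ => a + n • p) := by
    intro i j hij
    have : i • p = j • p := add_left_cancel hij
    wlog hlt : i < j generalizing i j
    · rcases lt_or_eq_of_le (not_lt.1 hlt) with h' | h'
      · exact (this hij.symm (add_left_cancel hij.symm) h').symm
      · exact h'.symm
    · exfalso
      obtain ⟨d, rfl⟩ := exists_add_of_le hlt.le
      have hd : d ≠ 0 := by omega
      have h0 : d • p = 0 := by
        have h3 : i • p + d • p = i • p + 0 := by rw [← add_smul, add_zero]; exact this.symm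
        exact add_left_cancel h3
      exact hp0 (IsAddTorsionFree.nsmul_right_injective hd (by simpa using h0))
  refine (Set.infinite_range_of_injective hinj) ((hfin (w a)).subset ?_)
  rintro _ ⟨n, rfl⟩
  refine ⟨⟨_, hA, ?_⟩, by simp [hw0]⟩
  exact ⟨n • p, nsmul_mem hp n, rfl⟩

end modules

end UnionGrowth

/-! ### Part 3: labels of paths in a finite automaton (Kleene algorithm) -/

namespace UnionGrowth

open Set Pointwise

/-- Labels of nonempty paths from `p` to `q` with intermediate vertices in `T`. -/
inductive Path {Q M : Type*} [AddCommMonoid M] (E : Q → Q → Set M) (T : Set Q) : Q → Q → M → Prop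
  | single {p q : Q} {x : M} (h : x ∈ E p q) : Path E T p q x
  | cons {p r q : Q} {x y : M} (h : x ∈ E p r) (hr : r ∈ T) (hy : Path E T r q y) :
      Path E T p q (x + y)

section
variable {Q M : Type*} [AddCommMonoid M] {E : Q → Q → Set M}

theorem Path.mono {T T' : Set Q} (h : T ⊆ T') {p q : Q} {x : M} (hx : Path E T p q x) :
    Path E T' p q x := by
  induction hx with
  | single h => exact .single h
  | cons h1 h2 _ ih => exact .cons h1 (h h2) ih

theorem Path.trans {T : Set Q} {p r q : Q} {x y : M} (hx : Path E T p r x) (hr : r ∈ T)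
    (hy : Path E T r q y) : Path E T p q (x + y) := by
  induction hx with
  | single h => exact .cons h hr hy
  | cons h1 h2 _ ih =>
    rw [add_assoc]
    exact .cons h1 h2 (ih hr hy)

theorem path_insert (T : Set Q) (r p q : Q) :
    {x | Path E (insert r T) p q x} = {x | Path E T p q x} ∪
      ({x | Path E T p r x} +
        ((AddSubmonoid.closure {x | Path E T r r x} : AddSubmonoid M) : Set M) +
        {x | Path E T r q x}) := by
  ext x
  constructor
  · intro hx
    change Path E (insert r T) p q x at hx
    induction hx with
    | single h => exact Or.inl (.single h)
    | @cons p s q x y h hs _ ih =>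
      rcases hs with rfl | hs
      · right
        rcases ih with ih | ⟨_, ⟨a, ha, c, hc, rfl⟩, b, hb, rfl⟩
        · exact ⟨x + 0, ⟨x, .single h, 0, zero_mem _, rfl⟩, y, ih, by simp⟩
        · refine ⟨x + (a + c), ⟨x, .single h, a + c, ?_, rfl⟩, b, hb, by simp [add_assoc]⟩
          exact add_mem (AddSubmonoid.subset_closure ha) hc
      · rcases ih with ih | ⟨_, ⟨a, ha, c, hc, rfl⟩, b, hb, rfl⟩
        · exact Or.inl (.cons h hs ih)
        · right
          exact ⟨(x + a) + c, ⟨x + a, .cons h hs ha, c, hc, rfl⟩, b, hb, by simp [add_assoc]⟩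
  · have hr : r ∈ insert r T := mem_insert _ _
    have hsub : T ⊆ insert r T := subset_insert _ _
    rintro (hx | ⟨_, ⟨a, ha, c, hc, rfl⟩, b, hb, rfl⟩)
    · exact Path.mono hsub hx
    · have hb' : Path E (insert r T) r q b := Path.mono hsub hb
      have hcb : Path E (insert r T) r q (c + b) := by
        clear ha
        have key : ∀ b, Path E (insert r T) r q b → Path E (insert r T) r q (c + b) := by
          induction hc using AddSubmonoid.closure_induction with
          | mem z hz => exact fun b hb => (Path.mono hsub hz).trans hr hb
          | zero => intro b hb; rwa [zero_add]
          | add u v _ _ hu hv =>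
            intro b hb
            rw [add_assoc]
            exact hu _ (hv _ hb)
        exact key b hb'
      change Path E (insert r T) p q (a + c + b)
      rw [add_assoc]
      exact (Path.mono hsub ha).trans hr hcb

theorem path_semilinear [Finite Q] (hE : ∀ p q, IsSemilinearSet (E p q)) (p q : Q) :
    IsSemilinearSet {x | Path E univ p q x} := by
  have key : ∀ T : Set Q, T.Finite → ∀ p q, IsSemilinearSet {x | Path E T p q x} := by
    intro T hT
    induction T, hT using Set.Finite.induction_on with
    | empty =>
      intro p q
      convert hE p q using 1
      ext x
      constructor
      · intro h
        cases h with
        | single h => exact h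
        | cons _ h _ => exact absurd h (by simp)
      · exact fun h => .single h
    | @insert r T _ _ ih =>
      intro p q
      rw [path_insert]
      exact (ih p q).union (((ih p r).add (ih r r).closure).add (ih r q))
  exact key univ finite_univ p q

end

/-! ### Part 4: coordinates on a virtually abelian group -/

theorem exists_coords {G : Type*} [Group G] (n : ℕ) (N : Subgroup G) [N.Normal]
    (e : N ≃* Multiplicative (Fin n → ℤ)) :
    ∃ (val : G ⧸ N → G → (Fin n → ℤ)) (φ : G ⧸ N → (Fin n → ℤ) → G)
      (ψ : Multiplicative (Fin n → ℤ) →* G),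
      (∀ p g h, val p (g * h) = val p g + val (p * (g : G ⧸ N)) h) ∧
      (∀ g : G, φ (g : G ⧸ N) (val 1 g) = g) ∧
      (∀ q a, ((φ q a : G) : G ⧸ N) = q) ∧
      (∀ q a, val 1 (φ q a) = a) ∧
      (∀ q a b, φ q (a + b) = ψ (Multiplicative.ofAdd b) * φ q a) := by
  let τ : G ⧸ N → G := Quotient.out
  have hτ : ∀ q : G ⧸ N, ((τ q : G) : G ⧸ N) = q := fun q => QuotientGroup.out_eq' q
  have hmem : ∀ (p : G ⧸ N) (g : G), τ p * g * (τ (p * (g : G ⧸ N)))⁻¹ ∈ N := by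
    intro p g
    rw [← QuotientGroup.eq_one_iff]
    simp [hτ]
  let val : G ⧸ N → G → (Fin n → ℤ) := fun p g => Multiplicative.toAdd (e ⟨_, hmem p g⟩)
  let φ : G ⧸ N → (Fin n → ℤ) → G := fun q a =>
    (τ 1)⁻¹ * (e.symm (Multiplicative.ofAdd a) : G) * τ q
  let ψ : Multiplicative (Fin n → ℤ) →* G :=
    (MulAut.conj (τ 1)⁻¹).toMonoidHom.comp (N.subtype.comp e.symm.toMonoidHom)
  have hφ : ∀ q a, ((φ q a : G) : G ⧸ N) = q := by
    intro q a
    have h1 : (((e.symm (Multiplicative.ofAdd a) : N) : G) : G ⧸ N) = 1 :=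
      (QuotientGroup.eq_one_iff _).2 (e.symm (Multiplicative.ofAdd a)).2
    simp only [φ, QuotientGroup.mk_mul, QuotientGroup.mk_inv, hτ, h1]
    simp
  refine ⟨val, φ, ψ, ?_, ?_, hφ, ?_, ?_⟩
  · intro p g h
    simp only [val]
    rw [← toAdd_mul, ← map_mul]
    congr 2
    apply Subtype.ext
    simp only [Subgroup.coe_mul, QuotientGroup.mk_mul]
    group
  · intro g
    simp only [φ, val, ofAdd_toAdd, MulEquiv.symm_apply_apply, one_mul]
    group
  · intro q a
    have h2 : (⟨_, hmem 1 (φ q a)⟩ : N) = e.symm (Multiplicative.ofAdd a) := by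
      apply Subtype.ext
      simp only [hφ, one_mul]
      simp only [φ]
      group
    simp only [val, h2, MulEquiv.apply_symm_apply, toAdd_ofAdd]
  · intro q a b
    have : Multiplicative.ofAdd (a + b) = Multiplicative.ofAdd b * Multiplicative.ofAdd a := by
      rw [add_comm, ofAdd_add]
    simp only [φ, ψ, this, map_mul, Subgroup.coe_mul]
    simp
    group

/-- The trace of a subgroup on a coset is semilinear. -/
theorem semilinear_subgroup {G : Type*} [Group G] {n : ℕ} (φ : (Fin n → ℤ) → G)
    (ψ : Multiplicative (Fin n → ℤ) →* G)
    (h : ∀ a b, φ (a + b) = ψ (Multiplicative.ofAdd b) * φ a) (H : Subgroup G) :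
    IsSemilinearSet {a | φ a ∈ H} := by
  by_cases hne : ∃ a, φ a ∈ H
  · obtain ⟨a, ha⟩ := hne
    let K : AddSubgroup (Fin n → ℤ) := Subgroup.toAddSubgroup' (H.comap ψ)
    have hK : ∀ b, b ∈ K ↔ ψ (Multiplicative.ofAdd b) ∈ H := fun b => Iff.rfl
    have hfg : K.toAddSubmonoid.FG := by
      rw [← AddSubgroup.fg_iff_addSubmonoid_fg]
      have : (AddSubgroup.toIntSubmodule K).FG := IsNoetherian.noetherian _
      rwa [Submodule.fg_iff_addSubgroup_fg, AddSubgroup.toIntSubmodule_toAddSubgroup] at this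
    have := (IsSemilinearSet.of_fg hfg).vadd a
    convert this using 1
    ext x
    simp only [mem_ofPred_eq, mem_vadd_set, vadd_eq_add]
    constructor
    · intro hx
      refine ⟨x - a, ?_, by simp⟩
      change x - a ∈ K
      rw [hK]
      have h1 := h a (x - a)
      rw [add_sub_cancel] at h1
      rw [h1] at hx
      exact (Subgroup.mul_mem_cancel_right H ha).1 hx
    · rintro ⟨y, hy, rfl⟩
      have hy : y ∈ K := hy
      rw [hK] at hy
      rw [h]
      exact H.mul_mem hy ha
  · convert IsSemilinearSet.empty using 1
    ext x
    simp only [mem_ofPred_eq, mem_empty_iff_false, iff_false]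
    exact fun hx => hne ⟨x, hx⟩

end UnionGrowth

/-! ### Part 5: the main theorem -/

namespace UnionGrowth

open Set Pointwise

theorem finite_words {G : Type*} [Group G] (S : Finset G) (ω : G → ℕ) (hω : ∀ s ∈ S, 0 < ω s)
    (m : ℕ) : {l : List G | (∀ x ∈ l, x ∈ S) ∧ (l.map ω).sum = m}.Finite := by
  have hlen : ∀ l : List G, (∀ x ∈ l, x ∈ S) → l.length ≤ (l.map ω).sum := by
    intro l
    induction l with
    | nil => simp
    | cons a l ih =>
      intro h
      have h1 := hω a (h a List.mem_cons_self)
      have h2 := ih fun x hx => h x (List.mem_cons_of_mem _ hx)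
      simp only [List.length_cons, List.map_cons, List.sum_cons]
      omega
  refine ((List.finite_length_le S m).image (List.map Subtype.val)).subset ?_
  rintro l ⟨hl, hm⟩
  lift l to List S using hl
  have hle := hlen (l.map Subtype.val)
    (fun x hx => by obtain ⟨y, _, rfl⟩ := List.mem_map.1 hx; exact y.2)
  rw [hm, List.length_map] at hle
  exact ⟨l, hle, rfl⟩

/-- The set of pairs (coordinate, weight of a word) over a given coset is semilinear. -/
theorem words_semilinear {G : Type*} [Group G] {n : ℕ} (N : Subgroup G) [N.Normal] [N.FiniteIndex]
    (S : Finset G) (ω : G → ℕ) (val : G ⧸ N → G → (Fin n → ℤ))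
    (hval : ∀ p g h, val p (g * h) = val p g + val (p * (g : G ⧸ N)) h) (q : G ⧸ N) :
    IsSemilinearSet {x : (Fin n → ℤ) × ℕ | ∃ l : List G, (∀ s ∈ l, s ∈ S) ∧
      ((l.prod : G) : G ⧸ N) = q ∧ x = (val 1 l.prod, (l.map ω).sum)} := by
  let E : G ⧸ N → G ⧸ N → Set ((Fin n → ℤ) × ℕ) := fun p q =>
    {x | ∃ s ∈ S, p * (s : G ⧸ N) = q ∧ x = (val p s, ω s)}
  have hE : ∀ p q, IsSemilinearSet (E p q) := by
    intro p q
    apply IsSemilinearSet.of_finite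
    refine (S.finite_toSet.image fun s => (val p s, ω s)).subset ?_
    rintro x ⟨s, hs, -, rfl⟩
    exact ⟨s, hs, rfl⟩
  have h1 : ∀ p q x, Path E univ p q x → ∃ l : List G, (∀ s ∈ l, s ∈ S) ∧
      p * ((l.prod : G) : G ⧸ N) = q ∧ x = (val p l.prod, (l.map ω).sum) := by
    intro p q x hx
    induction hx with
    | single h =>
      obtain ⟨s, hs, h1, rfl⟩ := h
      exact ⟨[s], by simpa using hs, by simpa using h1, by simp⟩
    | cons h _ _ ih =>
      obtain ⟨s, hs, h1, rfl⟩ := h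
      obtain ⟨l, hl, h2, rfl⟩ := ih
      refine ⟨s :: l, ?_, ?_, ?_⟩
      · intro t ht
        rcases List.mem_cons.1 ht with rfl | ht
        · exact hs
        · exact hl t ht
      · rw [← h2, ← h1, List.prod_cons, QuotientGroup.mk_mul, mul_assoc]
      · simp [hval, h1]
  have h2 : ∀ (l : List G) (s : G) (p : G ⧸ N), s ∈ S → (∀ t ∈ l, t ∈ S) →
      Path E univ p (p * (((s :: l).prod : G) : G ⧸ N))
        (val p (s :: l).prod, ((s :: l).map ω).sum) := by
    intro l
    induction l with
    | nil =>
      intro s p hs _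
      exact .single ⟨s, hs, by simp, by simp⟩
    | cons t l ih =>
      intro s p hs hl
      have h3 := ih t (p * (s : G ⧸ N)) (hl t List.mem_cons_self)
        fun u hu => hl u (List.mem_cons_of_mem _ hu)
      have h4 : Path E univ p _ _ := .cons ⟨s, hs, rfl, rfl⟩ (mem_univ _) h3
      convert h4 using 1
      · rw [List.prod_cons, QuotientGroup.mk_mul, mul_assoc]
      · rw [List.prod_cons, hval, List.map_cons, List.sum_cons, Prod.mk_add_mk]
  have hv1 : val 1 1 = 0 := by
    have := hval 1 1 1
    simpa using this
  have h3 : IsSemilinearSet {x : (Fin n → ℤ) × ℕ | x = 0 ∧ q = 1} :=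
    .of_finite ((finite_singleton (0 : (Fin n → ℤ) × ℕ)).subset fun x hx => hx.1)
  convert (path_semilinear hE 1 q).union h3 using 1
  ext x
  simp only [mem_union, mem_ofPred_eq]
  constructor
  · rintro ⟨l, hl, rfl, rfl⟩
    cases l with
    | nil => right; simp [hv1]
    | cons s l =>
      left
      have := h2 l s 1 (hl s List.mem_cons_self) fun t ht => hl t (List.mem_cons_of_mem _ ht)
      rwa [one_mul] at this
  · rintro (hx | ⟨rfl, rfl⟩)
    · obtain ⟨l, hl, h4, rfl⟩ := h1 _ _ _ hx
      exact ⟨l, hl, by rwa [one_mul] at h4, rfl⟩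
    · exact ⟨[], by simp, by simp, by simp [hv1]; rfl⟩

theorem ratG_main {G : Type*} [Group G]
    (n : ℕ) (N : Subgroup G) [N.Normal] [N.FiniteIndex]
    (e : N ≃* Multiplicative (Fin n → ℤ))
    (S : Finset G) (hS : Submonoid.closure (S : Set G) = ⊤)
    (ω : G → ℕ) (hω : ∀ s ∈ S, 0 < ω s)
    (k : ℕ) (H : Fin k → Subgroup G) :
    RatG (wordWeight (S : Set G) ω) {g | ∃ i, g ∈ H i} := by
  classical
  obtain ⟨val, φ, ψ, hval, hφval, hφq, hvalφ, hφadd⟩ := exists_coords n N e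
  -- the weight is attained
  have hatt : ∀ g : G, ∃ l : List G, (∀ x ∈ l, x ∈ (S : Set G)) ∧ l.prod = g ∧
      (l.map ω).sum = wordWeight (S : Set G) ω g := by
    intro g
    have hg : g ∈ Submonoid.closure (S : Set G) := by rw [hS]; trivial
    obtain ⟨l, hl, hp⟩ := Submonoid.exists_list_of_mem_closure hg
    exact Nat.sInf_mem (s := {n | ∃ l : List G, (∀ x ∈ l, x ∈ (S : Set G)) ∧ l.prod = g ∧
      (l.map ω).sum = n}) ⟨_, l, hl, hp, rfl⟩
  have hle : ∀ l : List G, (∀ x ∈ l, x ∈ S) →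
      wordWeight (S : Set G) ω l.prod ≤ (l.map ω).sum :=
    fun l hl => Nat.sInf_le ⟨l, hl, rfl, rfl⟩
  let w : (Fin n → ℤ) × ℕ →+ ℕ := AddMonoidHom.snd _ _
  let R : G ⧸ N → Set ((Fin n → ℤ) × ℕ) := fun q =>
    {x | ∃ l : List G, (∀ s ∈ l, s ∈ S) ∧ ((l.prod : G) : G ⧸ N) = q ∧
      x = (val 1 l.prod, (l.map ω).sum)}
  have hR : ∀ q a m, (a, m) ∈ R q ↔
      ∃ l : List G, (∀ s ∈ l, s ∈ S) ∧ l.prod = φ q a ∧ (l.map ω).sum = m := by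
    intro q a m
    constructor
    · rintro ⟨l, hl, rfl, h⟩
      obtain ⟨rfl, rfl⟩ := Prod.mk.inj h
      exact ⟨l, hl, (hφval _).symm, rfl⟩
    · rintro ⟨l, hl, h, rfl⟩
      exact ⟨l, hl, by rw [h, hφq], by rw [h, hvalφ]⟩
  let E : G ⧸ N → Set ((Fin n → ℤ) × ℕ) := fun q =>
    {x | (∃ i, φ q x.1 ∈ H i) ∧ wordWeight (S : Set G) ω (φ q x.1) = x.2}
  have hEfin : ∀ q m, (fib w (E q) m).Finite := by
    intro q m
    refine ((finite_words S ω hω m).image fun l => (val 1 l.prod, m)).subset ?_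
    rintro ⟨a, m'⟩ ⟨⟨-, h⟩, hm⟩
    have hm : m' = m := hm
    subst hm
    obtain ⟨l, hl, hp, hw⟩ := hatt (φ q a)
    exact ⟨l, ⟨hl, hw.trans h⟩, by simp [hp, hvalφ]⟩
  let T : Set ((Fin n → ℤ) × ℕ) := {x | x.1 = 0 ∧ 0 < x.2}
  have hT : IsSemilinearSet T := by
    refine IsLinearSet.isSemilinearSet ⟨(0, 1), {(0, 1)}, finite_singleton _, ?_⟩
    ext ⟨a, m⟩
    simp only [T, mem_vadd_set, SetLike.mem_coe, AddSubmonoid.mem_closure_singleton, vadd_eq_add,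
      mem_ofPred_eq]
    constructor
    · rintro ⟨rfl, hm⟩
      exact ⟨_, ⟨m - 1, rfl⟩, by ext <;> simp; omega⟩
    · rintro ⟨_, ⟨j, rfl⟩, h⟩
      obtain ⟨rfl, rfl⟩ := Prod.mk.inj h
      simp
  have hEeq : ∀ q, E q = (R q ∩ (AddMonoidHom.fst (Fin n → ℤ) ℕ) ⁻¹'
      (⋃ i, {a | φ q a ∈ H i})) \ (R q + T) := by
    intro q
    ext ⟨a, m⟩
    simp only [E, mem_sdiff, mem_inter_iff, mem_preimage, AddMonoidHom.coe_fst, mem_iUnion,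
      mem_ofPred_eq, hR]
    constructor
    · rintro ⟨hH, rfl⟩
      obtain ⟨l, hl, hp, hw⟩ := hatt (φ q a)
      refine ⟨⟨⟨l, hl, hp, hw⟩, hH⟩, ?_⟩
      rintro ⟨⟨b, j⟩, hb, ⟨c, i⟩, ⟨hc, hi⟩, h⟩
      simp only at hc hi
      subst hc
      obtain ⟨h1, h2⟩ := Prod.mk.inj h
      rw [add_zero] at h1
      subst h1
      obtain ⟨l', hl', hp', hw'⟩ := (hR _ _ _).1 hb
      have := hle l' hl'
      rw [hp'] at this
      simp only at h2 this hw' hi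
      omega
    · rintro ⟨⟨⟨l, hl, hp, hw⟩, hH⟩, hn⟩
      refine ⟨hH, ?_⟩
      by_contra hne
      have h1 := hle l hl
      rw [hp, hw] at h1
      apply hn
      obtain ⟨l', hl', hp', hw'⟩ := hatt (φ q a)
      refine ⟨(a, wordWeight (S : Set G) ω (φ q a)), (hR _ _ _).2 ⟨l', hl', hp', hw'⟩,
        (0, m - wordWeight (S : Set G) ω (φ q a)), ⟨rfl, ?_⟩, ?_⟩
      · simp only; omega
      · ext
        · simp
        · simp only [Prod.mk_add_mk]; omega
  have : AddMonoid.FG ((Fin n → ℤ) × ℕ) := by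
    have h0 : Module.Finite ℤ (Fin n → ℤ) := inferInstance
    have : AddGroup.FG (Fin n → ℤ) := inferInstance
    infer_instance
  have hEsl : ∀ q, IsSemilinearSet (E q) := by
    intro q
    rw [hEeq]
    have hRq : IsSemilinearSet (R q) := words_semilinear N S ω val hval q
    refine (hRq.inter (IsSemilinearSet.preimage (.iUnion fun i => ?_) _)).sdiff (hRq.add hT)
    exact semilinear_subgroup (φ q) ψ (hφadd q) (H i)
  have hErat : ∀ q, RatG w (E q) := fun q => semilinear_ratG w (hEsl q) (hEfin q)
  have hinj : ∀ q a b, φ q a = φ q b → a = b := fun q a b h => by rw [← hvalφ q a, h, hvalφ]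
  have hpiece : ∀ q, RatG (wordWeight (S : Set G) ω)
      {g : G | (∃ i, g ∈ H i) ∧ (g : G ⧸ N) = q} := by
    intro q
    have := (hErat q).image (g := fun x => φ q x.1) (w' := wordWeight (S : Set G) ω) (c := 0)
      ?_ ?_
    · convert this using 1
      ext g
      constructor
      · rintro ⟨hg, rfl⟩
        refine ⟨(val 1 g, wordWeight (S : Set G) ω g), ⟨?_, ?_⟩, hφval g⟩
        · simpa [hφval] using hg
        · simp [hφval]
      · rintro ⟨x, ⟨hx, -⟩, rfl⟩
        exact ⟨hx, hφq _ _⟩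
    · rintro ⟨a, m⟩ ⟨-, h⟩ ⟨b, m'⟩ ⟨-, h'⟩ hab
      have : a = b := hinj q a b hab
      subst this
      simp only at h h'
      rw [← h, ← h']
    · rintro ⟨a, m⟩ ⟨-, h⟩
      rw [zero_add]
      exact h
  have hfinQ : Finite (G ⧸ N) := inferInstance
  have hall : ∀ A : Set (G ⧸ N), A.Finite → RatG (wordWeight (S : Set G) ω)
      {g : G | (∃ i, g ∈ H i) ∧ (g : G ⧸ N) ∈ A} := by
    intro A hA
    induction A, hA using Set.Finite.induction_on with
    | empty => simpa using RatG.empty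
    | @insert q A hq _ ih =>
      convert (hpiece q).disjUnion ih ?_ using 1
      · ext g
        simp only [mem_insert_iff, mem_union, mem_ofPred_eq]
        tauto
      · rw [Set.disjoint_left]
        rintro g ⟨-, rfl⟩ ⟨-, h⟩
        exact hq h
  simpa using hall univ finite_univ

end UnionGrowth

/-- The relative growth series of a finite union of subgroups of a finitely generated
virtually abelian group is rational, for any finite weighted monoid generating set. -/
theorem union_of_subgroups_growth_series_rational {G : Type*} [Group G]
    (n : ℕ) (N : Subgroup G) (hN : N.Normal) (hNfin : N.FiniteIndex)
    (hNiso : Nonempty (N ≃* Multiplicative (Fin n → ℤ)))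
    (S : Finset G) (hS : Submonoid.closure (S : Set G) = ⊤)
    (ω : G → ℕ) (hω : ∀ s ∈ S, 0 < ω s)
    (k : ℕ) (H : Fin k → Subgroup G) :
    IsRationalSeries (PowerSeries.mk fun m =>
      (Nat.card {g : G // (∃ i, g ∈ H i) ∧ wordWeight (S : Set G) ω g = m} : ℤ)) := by
  obtain ⟨e⟩ := hNiso
  exact (UnionGrowth.ratG_main n N e S hS ω hω k H).2
end

section
/- Let G be a finitely generated virtually abelian group, let S be a finite set generating G as a monoid with weight function ω : S → ℕ₊, and let H be any subgroup of G. Define the weight of a right coset Hg to be ω(Hg) = min{ω(x) : x ∈ Hg}. Then the weighted growth series of the set of right cosets H\G, namely ∑_{n≥0} #{C ∈ H\G : ω(C) = n} zⁿ, is a rational power series. -/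
/-- The weight of a right coset `Hg`: the minimal weight of an element of the coset. -/
noncomputable def cosetWeight {G : Type*} [Group G] (S : Set G) (ω : G → ℕ)
    (H : Subgroup G) (C : Quotient (QuotientGroup.rightRel H)) : ℕ :=
  sInf {n | ∃ g : G, Quotient.mk (QuotientGroup.rightRel H) g = C ∧ wordWeight S ω g = n}

namespace CG
open Pointwise

theorem rat_poly (p : Polynomial ℤ) : IsRationalSeries (p : PowerSeries ℤ) :=
  ⟨p, 1, one_ne_zero, by simp⟩

theorem rat_zero : IsRationalSeries 0 := ⟨0, 1, one_ne_zero, by simp⟩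

theorem rat_add {f g : PowerSeries ℤ} (hf : IsRationalSeries f) (hg : IsRationalSeries g) :
    IsRationalSeries (f + g) := by
  obtain ⟨p, q, hq, h⟩ := hf
  obtain ⟨p', q', hq', h'⟩ := hg
  refine ⟨p * q' + p' * q, q * q', mul_ne_zero hq hq', ?_⟩
  push_cast
  rw [← h, ← h']
  ring

theorem rat_poly_mul {f : PowerSeries ℤ} (r : Polynomial ℤ) (hf : IsRationalSeries f) :
    IsRationalSeries ((r : PowerSeries ℤ) * f) := by
  obtain ⟨p, q, hq, h⟩ := hf
  refine ⟨r * p, q, hq, ?_⟩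
  push_cast
  rw [← h]
  ring

theorem rat_sub {f g : PowerSeries ℤ} (hf : IsRationalSeries f) (hg : IsRationalSeries g) :
    IsRationalSeries (f - g) := by
  have := rat_add hf (rat_poly_mul (-1) hg)
  convert this using 1
  push_cast
  ring

theorem rat_of_mul {f : PowerSeries ℤ} (r : Polynomial ℤ) (hr : r ≠ 0)
    (hf : IsRationalSeries (f * (r : PowerSeries ℤ))) : IsRationalSeries f := by
  obtain ⟨p, q, hq, h⟩ := hf
  refine ⟨p, r * q, mul_ne_zero hr hq, ?_⟩
  push_cast
  rw [← h]
  ring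

/-- The fibre of the weight function over `k`. -/
def fib {α : Type*} (wt : α → ℕ) (T : Set α) (k : ℕ) : Set α := T ∩ wt ⁻¹' {k}

/-- The counting series of a set. -/
noncomputable def gf {α : Type*} (wt : α → ℕ) (T : Set α) : PowerSeries ℤ :=
  PowerSeries.mk fun k => ((fib wt T k).ncard : ℤ)

/-- Finite fibres and rational counting series. -/
def Good {α : Type*} (wt : α → ℕ) (T : Set α) : Prop :=
  (∀ k, (fib wt T k).Finite) ∧ IsRationalSeries (gf wt T)

section
variable {α β : Type*} {wt : α → ℕ}

theorem good_empty : Good wt (∅ : Set α) := by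
  refine ⟨fun k => by simp [fib], ?_⟩
  convert rat_zero
  ext k
  simp [gf, fib]

theorem gf_union {A B : Set α} (hA : ∀ k, (fib wt A k).Finite) (hB : ∀ k, (fib wt B k).Finite)
    (hd : Disjoint A B) : gf wt (A ∪ B) = gf wt A + gf wt B := by
  ext k
  simp only [gf, PowerSeries.coeff_mk, map_add]
  have : fib wt (A ∪ B) k = fib wt A k ∪ fib wt B k := by
    simp [fib, Set.union_inter_distrib_right]
  rw [this, Set.ncard_union_eq _ (hA k) (hB k)]
  · push_cast; rfl
  · exact hd.mono Set.inter_subset_left Set.inter_subset_left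

theorem good_disjoint_union {A B : Set α} (hA : Good wt A) (hB : Good wt B)
    (hd : Disjoint A B) : Good wt (A ∪ B) := by
  refine ⟨fun k => ?_, ?_⟩
  · have : fib wt (A ∪ B) k = fib wt A k ∪ fib wt B k := by
      simp [fib, Set.union_inter_distrib_right]
    rw [this]
    exact (hA.1 k).union (hB.1 k)
  · rw [gf_union hA.1 hB.1 hd]
    exact rat_add hA.2 hB.2

theorem good_diff {A B : Set α} (hA : Good wt A) (hB : Good wt B) (h : A ⊆ B) :
    Good wt (B \ A) := by
  have hf : ∀ k, (fib wt (B \ A) k).Finite := fun k =>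
    (hB.1 k).subset (Set.inter_subset_inter_left _ Set.sdiff_subset)
  refine ⟨hf, ?_⟩
  have := gf_union hA.1 hf Set.disjoint_sdiff_right
  rw [Set.union_sdiff_cancel h] at this
  rw [eq_sub_of_add_eq' this.symm]
  exact rat_sub hB.2 hA.2

theorem good_union {A B : Set α} (hA : Good wt A) (hB : Good wt B) (hAB : Good wt (A ∩ B)) :
    Good wt (A ∪ B) := by
  have h := good_diff hAB hB Set.inter_subset_right
  have := good_disjoint_union hA h (by
    rw [Set.disjoint_left]; rintro x hx ⟨h1, h2⟩; exact h2 ⟨hx, h1⟩)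
  convert this using 1
  ext x; simp only [Set.mem_union, Set.mem_sdiff, Set.mem_inter_iff]; tauto

/-- Inclusion-exclusion. -/
theorem good_iUnion_of_inter (C : Set α → Prop) (hC : ∀ A B, C A → C B → C (A ∩ B))
    (hg : ∀ A, C A → Good wt A) (n : ℕ) : ∀ f : Fin n → Set α, (∀ i, C (f i)) →
      Good wt (⋃ i, f i) := by
  induction n with
  | zero => intro f _; simpa using good_empty
  | succ n ih =>
    intro f hf
    have h1 : (⋃ i, f i) = f 0 ∪ ⋃ i : Fin n, f i.succ := by
      ext x; simp [Fin.exists_fin_succ]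
    rw [h1]
    refine good_union (hg _ (hf 0)) (ih _ fun i => hf _) ?_
    rw [Set.inter_iUnion]
    exact ih _ fun i => hC _ _ (hf 0) (hf _)

theorem good_iUnion_finite (C : Set α → Prop) (hC : ∀ A B, C A → C B → C (A ∩ B))
    (hg : ∀ A, C A → Good wt A) {ι : Type*} [Finite ι] (f : ι → Set α) (hf : ∀ i, C (f i)) :
    Good wt (⋃ i, f i) := by
  obtain ⟨n, ⟨e⟩⟩ := Finite.exists_equiv_fin ι
  rw [← e.symm.surjective.iUnion_comp]
  exact good_iUnion_of_inter C hC hg n _ fun i => hf _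

theorem fib_image {wt' : β → ℕ} {T : Set α} (τ : α → β) (d : ℕ)
    (hd : ∀ t ∈ T, wt' (τ t) = wt t + d) (k : ℕ) :
    fib wt' (τ '' T) (k + d) = τ '' fib wt T k := by
  ext x
  constructor
  · rintro ⟨⟨t, ht, rfl⟩, h⟩
    refine ⟨t, ⟨ht, ?_⟩, rfl⟩
    have h : wt' (τ t) = k + d := h
    have := hd t ht
    change wt t = k
    omega
  · rintro ⟨t, ⟨ht, h⟩, rfl⟩
    refine ⟨⟨t, ht, rfl⟩, ?_⟩
    have h : wt t = k := h
    change wt' (τ t) = k + d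
    rw [hd t ht, h]

theorem fib_image_lt {wt' : β → ℕ} {T : Set α} (τ : α → β) (d : ℕ)
    (hd : ∀ t ∈ T, wt' (τ t) = wt t + d) (k : ℕ) (hk : k < d) :
    fib wt' (τ '' T) k = ∅ := by
  rw [Set.eq_empty_iff_forall_notMem]
  rintro x ⟨⟨t, ht, rfl⟩, h⟩
  have h : wt' (τ t) = k := h
  have := hd t ht
  omega

theorem gf_image {wt' : β → ℕ} {T : Set α} (τ : α → β) (d : ℕ)
    (hd : ∀ t ∈ T, wt' (τ t) = wt t + d) (hinj : Set.InjOn τ T) :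
    gf wt' (τ '' T) = (PowerSeries.X ^ d) * gf wt T := by
  ext k
  rw [PowerSeries.coeff_X_pow_mul']
  simp only [gf, PowerSeries.coeff_mk]
  split_ifs with h
  · obtain ⟨j, rfl⟩ := Nat.exists_eq_add_of_le' h
    rw [fib_image τ d hd, Set.InjOn.ncard_image (s := fib wt T j) (hinj.mono Set.inter_subset_left)]
    simp
  · rw [fib_image_lt τ d hd k (by omega)]
    simp

theorem good_image {wt' : β → ℕ} {T : Set α} (τ : α → β) (d : ℕ)
    (hd : ∀ t ∈ T, wt' (τ t) = wt t + d) (hinj : Set.InjOn τ T) (hT : Good wt T) :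
    Good wt' (τ '' T) := by
  refine ⟨fun k => ?_, ?_⟩
  · by_cases h : d ≤ k
    · obtain ⟨j, rfl⟩ := Nat.exists_eq_add_of_le' h
      rw [fib_image τ d hd]
      exact (hT.1 j).image _
    · rw [fib_image_lt τ d hd k (by omega)]
      exact Set.finite_empty
  · rw [gf_image τ d hd hinj]
    have := rat_poly_mul (Polynomial.X ^ d) hT.2
    simpa using this

theorem good_of_shift {S T : Set α} (τ : α → α) (d : ℕ) (hd0 : 0 < d)
    (hd : ∀ t ∈ T, wt (τ t) = wt t + d) (hinj : Set.InjOn τ T) (hT : ∀ k, (fib wt T k).Finite)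
    (hS : Good wt S) (hdis : Disjoint S (τ '' T)) (hu : T = S ∪ τ '' T) : Good wt T := by
  refine ⟨hT, ?_⟩
  have hτ : ∀ k, (fib wt (τ '' T) k).Finite := fun k =>
    (hT k).subset (Set.inter_subset_inter_left _ (by rw [Set.subset_def]; intro x hx; rw [hu]; exact Or.inr hx))
  have h := gf_union hS.1 hτ hdis
  rw [← hu, gf_image τ d hd hinj] at h
  refine rat_of_mul (1 - Polynomial.X ^ d) ?_ ?_
  · intro h0
    have := congrArg (Polynomial.eval 0) h0
    simp [hd0.ne'] at this
  · convert hS.2 using 1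
    push_cast
    have : gf wt S = gf wt T - PowerSeries.X ^ d * gf wt T := by
      rw [eq_sub_iff_add_eq]; exact h.symm
    rw [this]
    ring

theorem good_of_le (f : α → ℕ) (h : Good (Prod.snd : α × ℕ → ℕ) {p | f p.1 ≤ p.2}) :
    Good f Set.univ := by
  have h1 : Good (Prod.snd : α × ℕ → ℕ) ((fun p : α × ℕ => (p.1, p.2 + 1)) '' {p | f p.1 ≤ p.2}) :=
    good_image _ 1 (fun t _ => rfl) (by rintro ⟨a, b⟩ _ ⟨c, d⟩ _; simp) h
  have h2 := good_diff h1 h (by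
    rintro _ ⟨⟨a, k⟩, hk, rfl⟩
    exact Nat.le_succ_of_le hk)
  have h3 := good_image (wt' := f) Prod.fst 0 (T := _) ?_ ?_ h2
  · convert h3
    symm
    rw [Set.eq_univ_iff_forall]
    intro a
    refine ⟨(a, f a), ⟨le_refl (f a), ?_⟩, rfl⟩
    rintro ⟨⟨b, k⟩, hk, he⟩
    simp only [Prod.mk.injEq] at he
    have hk : f b ≤ k := hk
    obtain ⟨rfl, h⟩ := he
    omega
  all_goals
    have key : ∀ t ∈ {p : α × ℕ | f p.1 ≤ p.2} \ ((fun p : α × ℕ => (p.1, p.2 + 1)) '' {p | f p.1 ≤ p.2}),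
        f t.1 = t.2 := by
      rintro ⟨a, k⟩ ⟨h1, h2⟩
      have h1 : f a ≤ k := h1
      by_contra hne
      have hne : f a ≠ k := hne
      refine h2 ⟨(a, k - 1), (by change f a ≤ k - 1; omega), ?_⟩
      simp only [Prod.mk.injEq, true_and]
      omega
  · intro t ht
    simpa using key t ht
  · intro t ht s hs hts
    refine Prod.ext hts ?_
    rw [← key t ht, ← key s hs, hts]
end

/-- weight on `ι → ℕ`. -/
theorem good_Ici {ι : Type*} [Fintype ι] (w : ι → ℕ) (hw : ∀ i, 0 < w i) (a : ι → ℕ) :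
    Good (fun u : ι → ℕ => ∑ i, w i * u i) (Set.Ici a) := by
  classical
  set wt : (ι → ℕ) → ℕ := fun u : ι → ℕ => ∑ i, w i * u i with hwt
  have hfin : ∀ k, (fib wt Set.univ k).Finite := by
    intro k
    refine (Set.finite_Iic (fun _ : ι => k)).subset ?_
    rintro u ⟨-, hu⟩ i
    have hu : ∑ i, w i * u i = k := hu
    have h1 : w i * u i ≤ ∑ i, w i * u i :=
      Finset.single_le_sum (f := fun i => w i * u i) (fun _ _ => Nat.zero_le _) (Finset.mem_univ i)
    have := Nat.le_mul_of_pos_left (u i) (hw i)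
    simp only
    omega
  have main : ∀ J : Finset ι, Good wt {u | a ≤ u ∧ ∀ i ∉ J, u i = a i} := by
    intro J
    induction J using Finset.induction_on with
    | empty =>
      have : {u : ι → ℕ | a ≤ u ∧ ∀ i ∉ (∅ : Finset ι), u i = a i} = {a} := by
        ext u
        simp only [Finset.notMem_empty, not_false_eq_true, forall_const, Set.mem_ofPred_eq,
          Set.mem_singleton_iff]
        constructor
        · rintro ⟨_, h⟩; exact funext h
        · rintro rfl; exact ⟨le_rfl, fun _ => rfl⟩
      rw [this]
      refine ⟨fun k => (Set.finite_singleton a).subset Set.inter_subset_left, ?_⟩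
      convert rat_poly (Polynomial.X ^ (wt a)) using 1
      ext k
      simp only [gf, PowerSeries.coeff_mk, Polynomial.coe_pow, Polynomial.coe_X,
        PowerSeries.coeff_X_pow, fib]
      split_ifs with h
      · have : ({a} ∩ wt ⁻¹' {k} : Set (ι → ℕ)) = {a} := by
          ext u; simp only [Set.mem_inter_iff, Set.mem_singleton_iff, Set.mem_preimage]
          constructor
          · exact fun h => h.1
          · rintro rfl; exact ⟨rfl, h.symm⟩
        rw [this]; simp
      · have : ({a} ∩ wt ⁻¹' {k} : Set (ι → ℕ)) = ∅ := by
          rw [Set.eq_empty_iff_forall_notMem]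
          rintro u ⟨h1, h2⟩
          rw [Set.mem_singleton_iff] at h1
          subst h1
          exact h h2.symm
        rw [this]; simp
    | insert j J hj ih =>
      refine good_of_shift (fun u => u + Pi.single j 1) (w j) (hw j) ?_ ?_ ?_ ih ?_ ?_
      · intro t _
        simp only [hwt, Pi.add_apply, mul_add, Finset.sum_add_distrib]
        congr 1
        simp [Pi.single_apply]
      · intro t _ s _ h
        exact add_right_cancel h
      · exact fun k => (hfin k).subset (Set.inter_subset_inter_left _ (Set.subset_univ _))
      · rw [Set.disjoint_left]
        rintro u ⟨h1, h2⟩ ⟨v, ⟨h3, h4⟩, rfl⟩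
        have := h2 j hj
        have h5 : a j ≤ v j := h3 j
        have this : v j + 1 = a j := by simpa using this
        omega
      · ext u
        constructor
        · rintro ⟨h1, h2⟩
          by_cases hu : u j = a j
          · left
            refine ⟨h1, fun i hi => ?_⟩
            by_cases hij : i = j
            · rw [hij, hu]
            · exact h2 i (by simp [hij, hi])
          · right
            refine ⟨u - Pi.single j 1, ⟨fun i => ?_, fun i hi => ?_⟩, ?_⟩
            · have : a i ≤ u i := h1 i
              by_cases hij : i = j
              · subst hij; simp; omega
              · simpa [Pi.single_apply, hij] using this
            · have hij : i ≠ j := by rintro rfl; simp at hi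
              simpa [Pi.single_apply, hij] using h2 i hi
            · ext i
              have : a i ≤ u i := h1 i
              by_cases hij : i = j
              · subst hij; simp; omega
              · simp [Pi.single_apply, hij]
        · rintro (⟨h1, h2⟩ | ⟨v, ⟨h1, h2⟩, rfl⟩)
          · exact ⟨h1, fun i hi => h2 i (by simp at hi; tauto)⟩
          · refine ⟨h1.trans (by intro i; simp), fun i hi => ?_⟩
            have hij : i ≠ j := by rintro rfl; simp at hi
            simpa [Pi.single_apply, hij] using h2 i hi
  convert main Finset.univ using 1
  ext u; simp

theorem good_compl_upper {ι : Type*} [Fintype ι] (w : ι → ℕ) (hw : ∀ i, 0 < w i)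
    (U : Set (ι → ℕ)) (hU : IsUpperSet U) :
    Good (fun u : ι → ℕ => ∑ i, w i * u i) Uᶜ := by
  have hfin : {x | Minimal (· ∈ U) x}.Finite :=
    WellQuasiOrderedLE.finite_of_isAntichain (setOfPred_minimal_antichain _)
  have := hfin.to_subtype
  have hU' : U = ⋃ m : {x | Minimal (· ∈ U) x}, Set.Ici m.1 := by
    ext u
    simp only [Set.mem_iUnion, Set.mem_Ici]
    constructor
    · intro hu
      obtain ⟨m, hm, hm'⟩ := exists_minimal_le_of_wellFoundedLT (· ∈ U) u hu
      exact ⟨⟨m, hm'⟩, hm⟩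
    · rintro ⟨m, hm⟩
      exact hU hm m.2.1
  have hG : Good (fun u : ι → ℕ => ∑ i, w i * u i) U := by
    rw [hU']
    refine good_iUnion_finite (fun A => ∃ a, A = Set.Ici a) ?_ ?_ _ (fun i => ⟨_, rfl⟩)
    · rintro _ _ ⟨a, rfl⟩ ⟨b, rfl⟩
      exact ⟨a ⊔ b, Set.Ici_inter_Ici⟩
    · rintro _ ⟨a, rfl⟩
      exact good_Ici w hw a
  have hun := good_Ici w hw 0
  have h0 : Set.Ici (0 : ι → ℕ) = Set.univ := by ext u; simp
  rw [h0] at hun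
  rw [Set.compl_eq_univ_sdiff]
  exact good_diff hG hun (Set.subset_univ _)

end CG
namespace CG
open Pointwise

/-- Sets of the form `B + M` with `B` finite and `M` a finitely generated positive monoid. -/
def InC {K : Type*} [AddCommMonoid K] (wt : K →+ ℕ) (T : Set K) : Prop :=
  ∃ (B : Set K) (M : AddSubmonoid K), B.Finite ∧ M.FG ∧ (∀ x ∈ M, x ≠ 0 → 0 < wt x) ∧
    T = B + (M : Set K)

theorem exists_param {K : Type*} [AddCommMonoid K] (wt : K →+ ℕ) (M : AddSubmonoid K)
    (hM : M.FG) (hpos : ∀ x ∈ M, x ≠ 0 → 0 < wt x) :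
    ∃ (p : ℕ) (φ : (Fin p → ℕ) →+ K), (∀ x, x ∈ M ↔ ∃ u, φ u = x) ∧
      ∀ i, 0 < wt (φ (Pi.single i 1)) := by
  classical
  obtain ⟨F, hF⟩ := hM
  set F' := F.erase 0 with hF'
  let e := F'.equivFin
  let v : Fin F'.card → K := fun i => (e.symm i).1
  let φ : (Fin F'.card → ℕ) →+ K :=
    { toFun := fun u => ∑ i, u i • v i
      map_zero' := by simp
      map_add' := by intro a b; simp [add_smul, Finset.sum_add_distrib] }
  have hsingle : ∀ i, φ (Pi.single i 1) = v i := by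
    intro i
    change ∑ j, (Pi.single i 1 : Fin F'.card → ℕ) j • v j = v i
    rw [Finset.sum_eq_single i]
    · simp
    · intro j _ hj; simp [Pi.single_apply, hj]
    · simp
  have hv : ∀ i, v i ∈ M ∧ v i ≠ 0 := by
    intro i
    have h : v i ≠ 0 ∧ v i ∈ F := Finset.mem_erase.1 (e.symm i).2
    refine ⟨?_, h.1⟩
    rw [← hF]
    exact AddSubmonoid.subset_closure h.2
  refine ⟨F'.card, φ, fun x => ⟨?_, ?_⟩, fun i => ?_⟩
  · intro hx
    have hle : M ≤ AddMonoidHom.mrange φ := by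
      rw [← hF, AddSubmonoid.closure_le]
      intro y hy
      by_cases hy0 : y = 0
      · subst hy0; exact zero_mem _
      · have hy' : y ∈ F' := by rw [hF', Finset.mem_erase]; exact ⟨hy0, hy⟩
        refine ⟨Pi.single (e ⟨y, hy'⟩) 1, ?_⟩
        rw [hsingle]
        simp [v]
    exact hle hx
  · rintro ⟨u, rfl⟩
    change ∑ i, u i • v i ∈ M
    exact sum_mem fun i _ => AddSubmonoid.nsmul_mem _ (hv i).1 _
  · rw [hsingle]
    exact hpos _ (hv i).1 (hv i).2

theorem wt_param {K : Type*} [AddCommMonoid K] (wt : K →+ ℕ) {p : ℕ} (φ : (Fin p → ℕ) →+ K)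
    (u : Fin p → ℕ) : wt (φ u) = ∑ i, wt (φ (Pi.single i 1)) * u i := by
  have h : u = ∑ i, u i • (Pi.single i 1 : Fin p → ℕ) := by
    ext j
    simp [Finset.sum_apply, Pi.single_apply]
  conv_lhs => rw [h]
  simp only [map_sum, map_nsmul, smul_eq_mul]
  exact Finset.sum_congr rfl fun i _ => mul_comm _ _

theorem InC.good {K : Type*} [AddCancelCommMonoid K] {wt : K →+ ℕ} {T : Set K}
    (hT : InC wt T) : Good wt T := by
  obtain ⟨B, M, hB, hM, hpos, rfl⟩ := hT
  obtain ⟨p, φ, hφ, hφpos⟩ := exists_param wt M hM hpos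
  induction B, hB using Set.Finite.induction_on with
  | empty => simpa using good_empty
  | @insert b B _ _ ih =>
    let bad : Set (Fin p → ℕ) :=
      {u | b + φ u ∈ B + (M : Set K) ∨ ∃ u', toLex u' < toLex u ∧ φ u' = φ u}
    have hup : IsUpperSet bad := by
      intro u v huv hu
      obtain ⟨d, rfl⟩ := exists_add_of_le huv
      rcases hu with hu | ⟨u', hlt, he⟩
      · left
        obtain ⟨b', hb', m, hm, he⟩ := hu
        refine ⟨b', hb', m + φ d, add_mem hm ((hφ _).2 ⟨d, rfl⟩), ?_⟩
        simp only at he ⊢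
        rw [map_add, ← add_assoc, ← add_assoc, he]
      · right
        refine ⟨u' + d, ?_, by rw [map_add, map_add, he]⟩
        rw [toLex_add, toLex_add]
        exact add_lt_add_left hlt _
    have hg := good_compl_upper (fun i => wt (φ (Pi.single i 1))) hφpos bad hup
    have hinj : Set.InjOn (fun u => b + φ u) badᶜ := by
      intro u hu v hv he
      have he : φ u = φ v := add_left_cancel he
      rcases lt_trichotomy (toLex u) (toLex v) with h | h | h
      · exact absurd (Or.inr ⟨u, h, he⟩) hv
      · exact toLex_inj.1 h
      · exact absurd (Or.inr ⟨v, h, he.symm⟩) hu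
    have hg' := good_image (wt' := wt) (fun u => b + φ u) (wt b) (by
      intro t _
      rw [map_add, wt_param, add_comm]) hinj hg
    have := good_disjoint_union ih hg' (by
      rw [Set.disjoint_left]
      rintro _ hx ⟨u, hu, rfl⟩
      exact hu (Or.inl hx))
    convert this using 1
    ext x
    constructor
    · rintro ⟨b', hb', m, hm, rfl⟩
      rcases hb' with rfl | hb'
      · by_cases hx : b' + m ∈ B + (M : Set K)
        · exact Or.inl hx
        · right
          obtain ⟨u, hu⟩ := (hφ m).1 hm
          obtain ⟨v, hv, hmin⟩ := WellFounded.has_min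
            (wellFounded_lt (α := Lex (Fin p → ℕ))) {v | φ (ofLex v) = m} ⟨toLex u, hu⟩
          have hv : φ (ofLex v) = m := hv
          refine ⟨ofLex v, ?_, by simp [hv]⟩
          rintro (h | ⟨u', h1, h2⟩)
          · rw [hv] at h; exact hx h
          · exact hmin (toLex u') (h2.trans hv) h1
      · exact Or.inl ⟨b', hb', m, hm, rfl⟩
    · rintro (⟨b', hb', m, hm, rfl⟩ | ⟨u, _, rfl⟩)
      · exact ⟨b', Or.inr hb', m, hm, rfl⟩
      · exact ⟨b, Or.inl rfl, φ u, (hφ _).2 ⟨u, rfl⟩, rfl⟩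

theorem InC.inter {K : Type*} [AddCancelCommMonoid K] {wt : K →+ ℕ} {T T' : Set K}
    (hT : InC wt T) (hT' : InC wt T') : InC wt (T ∩ T') := by
  obtain ⟨B, M, hB, hM, hpos, rfl⟩ := hT
  obtain ⟨B', M', hB', hM', hpos', rfl⟩ := hT'
  obtain ⟨p, φ, hφ, -⟩ := exists_param wt M hM hpos
  obtain ⟨q, ψ, hψ, -⟩ := exists_param wt M' hM' hpos'
  let f : (Fin p → ℕ) × (Fin q → ℕ) →+ K := φ.comp (AddMonoidHom.fst _ _)
  let g : (Fin p → ℕ) × (Fin q → ℕ) →+ K := ψ.comp (AddMonoidHom.snd _ _)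
  have hE := AddSubmonoid.fg_eqLocusM f g
  let X : K → K → Set ((Fin p → ℕ) × (Fin q → ℕ)) := fun b b' => {z | b + f z = b' + g z}
  let mins : K → K → Set ((Fin p → ℕ) × (Fin q → ℕ)) := fun b b' => {z | Minimal (· ∈ X b b') z}
  have hmin : ∀ b b', (mins b b').Finite := fun b b' =>
    WellQuasiOrderedLE.finite_of_isAntichain (setOfPred_minimal_antichain _)
  refine ⟨⋃ b ∈ B, ⋃ b' ∈ B', (fun z => b + f z) '' mins b b',
    (f.eqLocusM g).map f, ?_, hE.map f, ?_, ?_⟩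
  · exact hB.biUnion fun b _ => hB'.biUnion fun b' _ => (hmin b b').image _
  · rintro _ ⟨z, -, rfl⟩ h0
    exact hpos _ ((hφ _).2 ⟨z.1, rfl⟩) h0
  · ext x
    constructor
    · rintro ⟨⟨b, hb, m, hm, rfl⟩, b', hb', m', hm', he⟩
      obtain ⟨u, rfl⟩ := (hφ m).1 hm
      obtain ⟨v, rfl⟩ := (hψ m').1 hm'
      have hz : (u, v) ∈ X b b' := he.symm
      obtain ⟨z, hz1, hz2⟩ := exists_minimal_le_of_wellFoundedLT (· ∈ X b b') (u, v) hz
      obtain ⟨d, hd⟩ := exists_add_of_le hz1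
      have hz3 : b + f z = b' + g z := hz2.1
      have hz : b + f (u, v) = b' + g (u, v) := hz
      have hfd : f d = g d := by
        rw [hd, map_add, map_add, ← add_assoc, ← add_assoc, hz3] at hz
        exact add_left_cancel hz
      refine ⟨b + f z, ?_, f d, ⟨d, hfd, rfl⟩, ?_⟩
      · simp only [Set.mem_iUnion]
        exact ⟨b, hb, b', hb', z, hz2, rfl⟩
      · change b + f z + f d = b + f (u, v)
        rw [hd, map_add, add_assoc]
    · rintro ⟨_, hy, _, ⟨d, hd, rfl⟩, rfl⟩
      simp only [Set.mem_iUnion] at hy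
      obtain ⟨b, hb, b', hb', z, hz, rfl⟩ := hy
      have hz3 : b + f z = b' + g z := hz.1
      have hd : f d = g d := hd
      constructor
      · exact ⟨b, hb, f (z + d), (hφ _).2 ⟨(z + d).1, rfl⟩, by simp [add_assoc]⟩
      · refine ⟨b', hb', g (z + d), (hψ _).2 ⟨(z + d).2, rfl⟩, ?_⟩
        change b' + g (z + d) = b + f z + f d
        rw [hz3, hd, map_add, add_assoc]

/-- Finite unions of sets in the class are good. -/
theorem good_iUnion_InC {K : Type*} [AddCancelCommMonoid K] {wt : K →+ ℕ} {ι : Type*} [Finite ι]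
    (f : ι → Set K) (hf : ∀ i, InC wt (f i)) : Good wt (⋃ i, f i) :=
  good_iUnion_finite (InC wt) (fun _ _ h h' => h.inter h') (fun _ h => h.good) f hf

/-- The submonoid of zero and elements of positive weight. -/
def Kpos {K : Type*} [AddCommMonoid K] (wt : K →+ ℕ) : AddSubmonoid K where
  carrier := {x | x = 0 ∨ 0 < wt x}
  zero_mem' := Or.inl rfl
  add_mem' := by
    rintro a b (rfl | ha) (rfl | hb)
    · left; simp
    · right; simpa using hb
    · right; simpa using ha
    · right; rw [map_add]; omega

theorem InC_of_linear {K : Type*} [AddCommMonoid K] {wt : K →+ ℕ} (T : Set (Kpos wt)) (c : K)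
    (hT : IsLinearSet T) : InC wt ((fun x : Kpos wt => c + x.1) '' T) := by
  rw [isLinearSet_iff_exists_fg_eq_vadd] at hT
  obtain ⟨a, P, hP, rfl⟩ := hT
  refine ⟨{c + a.1}, P.map (Kpos wt).subtype, Set.finite_singleton _, hP.map _, ?_, ?_⟩
  · rintro _ ⟨x, _, rfl⟩ h0
    exact x.2.resolve_left h0
  · ext y
    constructor
    · rintro ⟨_, ⟨m, hm, rfl⟩, rfl⟩
      exact ⟨_, rfl, m.1, ⟨m, hm, rfl⟩, by simp [add_assoc]⟩
    · rintro ⟨_, rfl, _, ⟨m, hm, rfl⟩, rfl⟩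
      exact ⟨_, ⟨m, hm, rfl⟩, by simp [add_assoc]⟩

theorem good_of_semilinear {K : Type*} [AddCancelCommMonoid K] {wt : K →+ ℕ} {ι : Type*}
    [Finite ι] (T : ι → Set (Kpos wt)) (c : ι → K) (hT : ∀ i, IsSemilinearSet (T i)) :
    Good wt (⋃ i, (fun x : Kpos wt => c i + x.1) '' T i) := by
  choose S hS hlin heq using hT
  have : ∀ i, Finite (S i) := fun i => (hS i).to_subtype
  have h := good_iUnion_InC (wt := wt) (ι := Σ i, S i)
    (fun j => (fun x : Kpos wt => c j.1 + x.1) '' j.2.1)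
    (fun j => InC_of_linear _ _ (hlin _ _ j.2.2))
  convert h using 1
  rw [Set.iUnion_sigma]
  congr 1
  ext1 i
  rw [heq i, Set.sUnion_eq_iUnion, Set.image_iUnion]

/-- Nonempty paths through intermediate states in `J`. -/
inductive Path {Q K : Type*} [AddCommMonoid K] (R : Q → Q → Set K) (J : Set Q) : Q → Q → K → Prop
  | edge {a b : Q} {x : K} : x ∈ R a b → Path R J a b x
  | cons {a c b : Q} {x y : K} : x ∈ R a c → c ∈ J → Path R J c b y → Path R J a b (x + y)

section
variable {Q K : Type*} [AddCommMonoid K] {R : Q → Q → Set K}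

theorem Path.mono {J J' : Set Q} (h : J ⊆ J') {a b : Q} {x : K} (hp : Path R J a b x) :
    Path R J' a b x := by
  induction hp with
  | edge h => exact .edge h
  | cons h1 h2 _ ih => exact .cons h1 (h h2) ih

theorem Path.append {J : Set Q} {a q b : Q} (hq : q ∈ J) {x y : K} (hp : Path R J a q x)
    (hp' : Path R J q b y) : Path R J a b (x + y) := by
  induction hp with
  | edge h => exact .cons h hq hp'
  | cons h1 h2 _ ih => rw [add_assoc]; exact .cons h1 h2 (ih hq hp')

theorem path_insert (J : Set Q) (q a b : Q) :
    {x | Path R (insert q J) a b x} = {x | Path R J a b x} ∪ ({x | Path R J a q x} +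
      ((AddSubmonoid.closure {x | Path R J q q x} : AddSubmonoid K) : Set K) +
      {x | Path R J q b x}) := by
  have hsub : J ⊆ insert q J := Set.subset_insert _ _
  ext x
  constructor
  · intro h
    induction h with
    | edge h => exact Or.inl (.edge h)
    | @cons a c b x y h1 h2 _ ih =>
      rcases ih with ih | ih
      · rcases h2 with rfl | h2
        · refine Or.inr ⟨_, ⟨x, .edge h1, 0, zero_mem _, rfl⟩, y, ih, by simp⟩
        · exact Or.inl (.cons h1 h2 ih)
      · obtain ⟨_, ⟨y1, hy1, y2, hy2, rfl⟩, y3, hy3, rfl⟩ := ih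
        rcases h2 with rfl | h2
        · exact Or.inr ⟨_, ⟨x, .edge h1, y1 + y2,
            add_mem (AddSubmonoid.subset_closure hy1) hy2, rfl⟩, y3, hy3, by simp [add_assoc]⟩
        · exact Or.inr ⟨_, ⟨x + y1, .cons h1 h2 hy1, y2, hy2, rfl⟩, y3, hy3, by simp [add_assoc]⟩
  · rintro (h | ⟨_, ⟨y1, hy1, y2, hy2, rfl⟩, y3, hy3, rfl⟩)
    · exact Path.mono hsub h
    · refine Path.append (Set.mem_insert q J) ?_ (Path.mono hsub hy3)
      replace hy2 : y2 ∈ AddSubmonoid.closure {x | Path R J q q x} := hy2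
      induction hy2 using AddSubmonoid.closure_induction_right with
      | zero => simpa using Path.mono hsub hy1
      | add_right x hx y hy ih =>
        simp only at ih ⊢
        rw [← add_assoc]
        exact Path.append (Set.mem_insert q J) ih (Path.mono hsub hy)

theorem path_semilinear [Finite Q] (hR : ∀ a b, (R a b).Finite) (a b : Q) :
    IsSemilinearSet {x | Path R Set.univ a b x} := by
  have key : ∀ J : Set Q, J.Finite → ∀ a b, IsSemilinearSet {x | Path R J a b x} := by
    intro J hJ
    induction J, hJ using Set.Finite.induction_on with
    | empty =>
      intro a b
      refine IsSemilinearSet.of_finite ((hR a b).subset ?_)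
      rintro x (h | ⟨-, h, -⟩)
      · exact h
      · exact h.elim
    | @insert q J _ _ ih =>
      intro a b
      rw [path_insert]
      exact (ih a b).union (((ih a q).add (ih q q).closure).add (ih q b))
  exact key _ Set.finite_univ a b
end

end CG
namespace CG
open Pointwise

theorem exists_word {G : Type*} [Group G] (S : Set G) (hS : Submonoid.closure S = ⊤) (g : G) :
    ∃ l : List G, (∀ x ∈ l, x ∈ S) ∧ l.prod = g :=
  Submonoid.exists_list_of_mem_closure (by rw [hS]; trivial)

theorem wordWeight_le {G : Type*} [Group G] (S : Set G) (hS : Submonoid.closure S = ⊤)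
    (ω : G → ℕ) (g : G) (k : ℕ) :
    wordWeight S ω g ≤ k ↔ ∃ l : List G, (∀ x ∈ l, x ∈ S) ∧ l.prod = g ∧ (l.map ω).sum ≤ k := by
  constructor
  · intro h
    obtain ⟨l, hl, hg⟩ := exists_word S hS g
    obtain ⟨l', h1, h2, h3⟩ := Nat.sInf_mem
      (s := {n | ∃ l : List G, (∀ x ∈ l, x ∈ S) ∧ l.prod = g ∧ (l.map ω).sum = n}) ⟨_, l, hl, hg, rfl⟩
    refine ⟨l', h1, h2, ?_⟩
    rw [h3]
    exact h
  · rintro ⟨l, h1, h2, h3⟩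
    have h4 : wordWeight S ω g ≤ (l.map ω).sum := Nat.sInf_le ⟨l, h1, h2, rfl⟩
    exact h4.trans h3

theorem mk_eq_iff {G : Type*} [Group G] (H : Subgroup G) (g g' : G) :
    (Quotient.mk (QuotientGroup.rightRel H) g = Quotient.mk (QuotientGroup.rightRel H) g') ↔
      g' * g⁻¹ ∈ H := by
  rw [Quotient.eq]
  exact QuotientGroup.rightRel_apply

theorem cosetWeight_le {G : Type*} [Group G] (S : Set G) (hS : Submonoid.closure S = ⊤)
    (ω : G → ℕ) (H : Subgroup G) (g : G) (k : ℕ) :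
    cosetWeight S ω H (Quotient.mk _ g) ≤ k ↔
      ∃ h ∈ H, ∃ l : List G, (∀ x ∈ l, x ∈ S) ∧ l.prod = h * g ∧ (l.map ω).sum ≤ k := by
  constructor
  · intro h
    obtain ⟨g', h1, h2⟩ := Nat.sInf_mem
      (s := {n | ∃ g' : G, Quotient.mk (QuotientGroup.rightRel H) g' =
        Quotient.mk (QuotientGroup.rightRel H) g ∧ wordWeight S ω g' = n}) ⟨_, g, rfl, rfl⟩
    have h3 : wordWeight S ω g' ≤ k := by rw [h2]; exact h
    obtain ⟨l, hl, hp, hw⟩ := (wordWeight_le S hS ω g' k).1 h3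
    refine ⟨g' * g⁻¹, (mk_eq_iff H _ _).1 h1.symm, l, hl, by simp [hp], hw⟩
  · rintro ⟨h, hh, l, hl, hp, hw⟩
    have h1 : Quotient.mk (QuotientGroup.rightRel H) (h * g) = Quotient.mk _ g := by
      rw [mk_eq_iff]
      simpa using H.inv_mem hh
    have h2 : cosetWeight S ω H (Quotient.mk _ g) ≤ wordWeight S ω (h * g) :=
      Nat.sInf_le ⟨h * g, h1, rfl⟩
    exact h2.trans ((wordWeight_le S hS ω _ k).2 ⟨l, hl, hp, hw⟩)

section
variable {G : Type*} [Group G] {A : Type*} [AddCommGroup A] (N : Subgroup G) [N.Normal]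
  (S : Finset G) (ω : G → ℕ) (ν : G → A)

/-- The weight on `A × ℕ`. -/
abbrev sw (A : Type*) [AddCommGroup A] : A × ℕ →+ ℕ := AddMonoidHom.snd A ℕ

/-- Representatives. -/
noncomputable def sg (q : G ⧸ N) : G := Quotient.out q

theorem mk_sg (q : G ⧸ N) : ((sg N q : G) : G ⧸ N) = q := QuotientGroup.out_eq' q

/-- The edges of the automaton. -/
def Ed (a b : G ⧸ N) : Set (Kpos (sw A)) :=
  {x | (∃ s ∈ S, a * (s : G ⧸ N) = b ∧ x.1 = (ν (sg N a * s * (sg N b)⁻¹), ω s)) ∨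
    (a = b ∧ x.1 = (0, 1))}

theorem Ed_finite (a b : G ⧸ N) : (Ed N S ω ν a b).Finite := by
  have h : ((fun s => (ν (sg N a * s * (sg N b)⁻¹), ω s)) '' (S : Set G) ∪ {(0, 1)}).Finite :=
    (S.finite_toSet.image _).union (Set.finite_singleton _)
  refine (h.preimage (f := (Subtype.val : Kpos (sw A) → A × ℕ))
    Subtype.val_injective.injOn).subset ?_
  rintro x (⟨s, hs, _, h⟩ | ⟨_, h⟩)
  · exact Or.inl ⟨s, hs, h.symm⟩
  · exact Or.inr h

/-- All paths including the empty one. -/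
def PP (a b : G ⧸ N) : Set (Kpos (sw A)) :=
  {x | Path (Ed N S ω ν) Set.univ a b x} ∪ {x | x = 0 ∧ a = b}

theorem PP_semilinear [Finite (G ⧸ N)] (a b : G ⧸ N) : IsSemilinearSet (PP N S ω ν a b) := by
  refine (path_semilinear (Ed_finite N S ω ν) a b).union (IsSemilinearSet.of_finite ?_)
  exact (Set.finite_singleton 0).subset fun x hx => hx.1

theorem PP_cons {a b c : G ⧸ N} {x y : Kpos (sw A)} (hx : x ∈ Ed N S ω ν a b)
    (hy : y ∈ PP N S ω ν b c) : x + y ∈ PP N S ω ν a c := by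
  rcases hy with hy | ⟨rfl, rfl⟩
  · exact Or.inl (.cons hx (Set.mem_univ _) hy)
  · rw [add_zero]; exact Or.inl (.edge hx)

theorem mem_N (a b : G ⧸ N) (g : G) (h : a * (g : G ⧸ N) = b) :
    sg N a * g * (sg N b)⁻¹ ∈ N := by
  rw [← QuotientGroup.eq_one_iff]
  simp [mk_sg, h]

theorem nu_one (hmul : ∀ x ∈ N, ∀ y ∈ N, ν (x * y) = ν x + ν y) : ν 1 = 0 := by
  have := hmul 1 N.one_mem 1 N.one_mem
  simpa using this

theorem PP_sound (hmul : ∀ x ∈ N, ∀ y ∈ N, ν (x * y) = ν x + ν y)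
    {q c : G ⧸ N} {x : Kpos (sw A)} (hx : x ∈ PP N S ω ν q c) :
    ∃ l : List G, (∀ s ∈ l, s ∈ S) ∧ q * (l.prod : G ⧸ N) = c ∧
      x.1.1 = ν (sg N q * l.prod * (sg N c)⁻¹) ∧ (l.map ω).sum ≤ x.1.2 := by
  rcases hx with hx | ⟨rfl, rfl⟩
  · replace hx : Path (Ed N S ω ν) Set.univ q c x := hx
    have hedge : ∀ {a b : G ⧸ N} {x : Kpos (sw A)}, x ∈ Ed N S ω ν a b →
        ∃ l : List G, (∀ s ∈ l, s ∈ S) ∧ a * (l.prod : G ⧸ N) = b ∧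
        x.1.1 = ν (sg N a * l.prod * (sg N b)⁻¹) ∧ (l.map ω).sum ≤ x.1.2 := by
      rintro a b x (⟨s, hs, hab, h⟩ | ⟨rfl, h⟩)
      · exact ⟨[s], by simpa using hs, by simpa using hab, by simp [h], by simp [h]⟩
      · exact ⟨[], by simp, by simp, by simp [h, nu_one N ν hmul], by simp⟩
    induction hx with
    | edge h => exact hedge h
    | @cons a b c x y h1 _ _ ih =>
      obtain ⟨l1, h11, h12, h13, h14⟩ := hedge h1
      obtain ⟨l2, h21, h22, h23, h24⟩ := ih
      refine ⟨l1 ++ l2, ?_, ?_, ?_, ?_⟩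
      · intro s hs
        rcases List.mem_append.1 hs with h | h
        · exact h11 s h
        · exact h21 s h
      · rw [List.prod_append, QuotientGroup.mk_mul, ← mul_assoc, h12, h22]
      · change x.1.1 + y.1.1 = _
        rw [h13, h23, ← hmul _ (mem_N N _ _ _ h12) _ (mem_N N _ _ _ h22)]
        congr 1
        rw [List.prod_append]
        group
      · change _ ≤ x.1.2 + y.1.2
        rw [List.map_append, List.sum_append]
        omega
  · exact ⟨[], by simp, by simp, by simp [nu_one N ν hmul], by simp⟩

theorem PP_complete (hmul : ∀ x ∈ N, ∀ y ∈ N, ν (x * y) = ν x + ν y)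
    (hω : ∀ s ∈ S, 0 < ω s) (l : List G) : ∀ (q c : G ⧸ N) (k : ℕ),
    (∀ s ∈ l, s ∈ S) → q * (l.prod : G ⧸ N) = c → (l.map ω).sum ≤ k →
      ∃ x ∈ PP N S ω ν q c, x.1 = (ν (sg N q * l.prod * (sg N c)⁻¹), k) := by
  induction l with
  | nil =>
    intro q c k _ hc _
    have hc : q = c := by simpa using hc
    subst hc
    have h0 : ν (sg N q * ([] : List G).prod * (sg N q)⁻¹) = 0 := by simp [nu_one N ν hmul]
    rw [h0]
    clear * -
    induction k with
    | zero => exact ⟨0, Or.inr ⟨rfl, rfl⟩, rfl⟩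
    | succ k ih =>
      obtain ⟨x, hx, hx'⟩ := ih
      let e : Kpos (sw A) := ⟨(0, 1), Or.inr Nat.one_pos⟩
      refine ⟨e + x, PP_cons N S ω ν (Or.inr ⟨rfl, rfl⟩) hx, ?_⟩
      change (0, 1) + x.1 = _
      rw [hx']
      ext
      · simp
      · simp [add_comm]
  | cons s l ih =>
    intro q c k hl hc hk
    have hs : s ∈ S := hl s (by simp)
    rw [List.map_cons, List.sum_cons] at hk
    have hc' : (q * (s : G ⧸ N)) * (l.prod : G ⧸ N) = c := by
      rw [← hc, List.prod_cons, QuotientGroup.mk_mul, mul_assoc]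
    obtain ⟨x, hx, hx'⟩ := ih (q * (s : G ⧸ N)) c (k - ω s) (fun t ht => hl t (by simp [ht])) hc'
      (by omega)
    let e : Kpos (sw A) := ⟨(ν (sg N q * s * (sg N (q * (s : G ⧸ N)))⁻¹), ω s), Or.inr (hω s hs)⟩
    refine ⟨e + x, PP_cons N S ω ν (Or.inl ⟨s, hs, rfl, rfl⟩) hx, ?_⟩
    change (ν (sg N q * s * (sg N (q * (s : G ⧸ N)))⁻¹), ω s) + x.1 = _
    rw [hx', Prod.mk_add_mk, ← hmul _ (mem_N N _ _ _ rfl) _ (mem_N N _ _ _ hc')]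
    congr 1
    · congr 1
      rw [List.prod_cons]
      group
    · omega



theorem good_main (hmul : ∀ x ∈ N, ∀ y ∈ N, ν (x * y) = ν x + ν y)
    [Finite (G ⧸ N)] (H : Subgroup G) (hsurj : ∀ a, ∃ x ∈ N, ν x = a)
    (hker : ∀ x ∈ N, ν x = 0 ↔ x ∈ H) (hS : Submonoid.closure (S : Set G) = ⊤)
    (hω : ∀ s ∈ S, 0 < ω s) :
    Good (cosetWeight (S : Set G) ω H) Set.univ := by
  choose χ hχN hχ using hsurj
  have hinv : ∀ x ∈ N, ν x⁻¹ = - ν x := by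
    intro x hx
    have := hmul x hx x⁻¹ (N.inv_mem hx)
    rw [mul_inv_cancel, nu_one N ν hmul] at this
    exact (neg_eq_of_add_eq_zero_right this.symm).symm
  have heq : ∀ x ∈ N, ∀ y ∈ N, ν x = ν y ↔ y * x⁻¹ ∈ H := by
    intro x hx y hy
    rw [← hker _ (N.mul_mem hy (N.inv_mem hx)), hmul _ hy _ (N.inv_mem hx), hinv x hx,
      ← sub_eq_add_neg, sub_eq_zero]
    exact eq_comm
  let F : G ⧸ N → A → Quotient (QuotientGroup.rightRel H) :=
    fun c a => Quotient.mk _ (χ a * sg N c)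
  -- each piece is good
  have hpiece : ∀ c, Good (cosetWeight (S : Set G) ω H) (Set.range (F c)) := by
    intro c
    have hV : Good (Prod.snd : A × ℕ → ℕ)
        {p | cosetWeight (S : Set G) ω H (F c p.1) ≤ p.2} := by
      let I := {q : G ⧸ N // ∃ h ∈ H, (h : G ⧸ N) = q}
      let hh : I → G := fun q => q.2.choose
      have hhH : ∀ q, hh q ∈ H := fun q => q.2.choose_spec.1
      have hhq : ∀ q : I, (hh q : G ⧸ N) = q.1 := fun q => q.2.choose_spec.2
      have hhN : ∀ q : I, hh q * (sg N q.1)⁻¹ ∈ N := by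
        intro q
        rw [← QuotientGroup.eq_one_iff]
        simp [mk_sg, hhq]
      have h := good_of_semilinear (wt := sw A) (ι := I) (fun q => PP N S ω ν q.1 c)
        (fun q => (ν (hh q * (sg N q.1)⁻¹), 0)) (fun q => PP_semilinear N S ω ν q.1 c)
      have hcomb : ∀ (q : I) (l : List G), q.1 * (l.prod : G ⧸ N) = c →
          ν (hh q * (sg N q.1)⁻¹) + ν (sg N q.1 * l.prod * (sg N c)⁻¹) =
            ν (hh q * l.prod * (sg N c)⁻¹) := by
        intro q l hl
        rw [← hmul _ (hhN q) _ (mem_N N _ _ _ hl)]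
        congr 1
        group
      change Good (sw A) _
      convert h using 1
      ext ⟨a, k⟩
      simp only [Set.mem_iUnion]
      change cosetWeight (S : Set G) ω H (Quotient.mk _ (χ a * sg N c)) ≤ k ↔ _
      rw [cosetWeight_le _ hS]
      have hχ1 : ((χ a : G) : G ⧸ N) = 1 := (QuotientGroup.eq_one_iff _).2 (hχN a)
      constructor
      · rintro ⟨g, hg, l, hl, hp, hw⟩
        let q : I := ⟨((g⁻¹ : G) : G ⧸ N), g⁻¹, H.inv_mem hg, rfl⟩
        have hc : q.1 * (l.prod : G ⧸ N) = c := by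
          rw [hp]
          simp [q, mk_sg, hχ1]
        obtain ⟨x, hx, hx'⟩ := PP_complete N S ω ν hmul hω l q.1 c k hl hc hw
        refine ⟨q, x, hx, ?_⟩
        simp only
        rw [hx', Prod.mk_add_mk, hcomb q l hc, zero_add]
        congr 1
        have hN1 : hh q * g ∈ N := by
          rw [← QuotientGroup.eq_one_iff, QuotientGroup.mk_mul, hhq]
          simp [q]
        have : hh q * l.prod * (sg N c)⁻¹ = (hh q * g) * χ a := by rw [hp]; group
        rw [this, hmul _ hN1 _ (hχN a), (hker _ hN1).2 (H.mul_mem (hhH q) hg), hχ, zero_add]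
      · rintro ⟨q, x, hx, he⟩
        obtain ⟨l, hl, hc, h1, h2⟩ := PP_sound N S ω ν hmul hx
        have he1 : ν (hh q * (sg N q.1)⁻¹) + x.1.1 = a := congrArg Prod.fst he
        have he2 : 0 + x.1.2 = k := congrArg Prod.snd he
        rw [h1, hcomb q l hc, ← hχ a] at he1
        have hyN : hh q * l.prod * (sg N c)⁻¹ ∈ N := by
          rw [← QuotientGroup.eq_one_iff]
          simp [mk_sg, hhq, hc]
        have hyH := (heq _ (hχN a) _ hyN).1 he1.symm
        refine ⟨(hh q)⁻¹ * (hh q * l.prod * (sg N c)⁻¹ * (χ a)⁻¹),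
          H.mul_mem (H.inv_mem (hhH q)) hyH, l, hl, ?_, by omega⟩
        group
    have hA := good_of_le (fun a => cosetWeight (S : Set G) ω H (F c a)) hV
    have := good_image (wt' := cosetWeight (S : Set G) ω H) (F c) 0 (fun _ _ => rfl) ?_ hA
    · rwa [Set.image_univ] at this
    · intro a _ b _ hab
      have hab := (mk_eq_iff H _ _).1 hab
      have h2 : χ b * (χ a)⁻¹ ∈ H := by
        convert hab using 1
        group
      have := (heq _ (hχN a) _ (hχN b)).2 h2
      rwa [hχ, hχ] at this
  have hrange : ∀ c C, C ∈ Set.range (F c) ↔ ∃ g : G, Quotient.mk _ g = C ∧ (g : G ⧸ N) = c := by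
    intro c C
    constructor
    · rintro ⟨a, rfl⟩
      refine ⟨_, rfl, ?_⟩
      rw [QuotientGroup.mk_mul, mk_sg, (QuotientGroup.eq_one_iff _).2 (hχN a), one_mul]
    · rintro ⟨g, rfl, rfl⟩
      have hN1 : g * (sg N (g : G ⧸ N))⁻¹ ∈ N := by
        rw [← QuotientGroup.eq_one_iff]
        simp [mk_sg]
      refine ⟨ν (g * (sg N (g : G ⧸ N))⁻¹), ?_⟩
      rw [mk_eq_iff]
      have := (heq _ (hχN (ν (g * (sg N (g : G ⧸ N))⁻¹))) _ hN1).1 (hχ _)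
      convert this using 1
      group
  have hsub : ∀ c c' C, C ∈ Set.range (F c) → C ∈ Set.range (F c') →
      Set.range (F c) ⊆ Set.range (F c') := by
    intro c c' C h h' D hD
    obtain ⟨g, hg, rfl⟩ := (hrange _ _).1 h
    obtain ⟨g', hg', rfl⟩ := (hrange _ _).1 h'
    obtain ⟨d, rfl, hd⟩ := (hrange _ _).1 hD
    have hH : g' * g⁻¹ ∈ H := (mk_eq_iff H _ _).1 (hg.trans hg'.symm)
    refine (hrange _ _).2 ⟨g' * g⁻¹ * d, ?_, ?_⟩
    · rw [mk_eq_iff]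
      convert H.inv_mem hH using 1
      group
    · simp [hd]
  have huniv : (Set.univ : Set (Quotient (QuotientGroup.rightRel H))) = ⋃ c, Set.range (F c) := by
    symm
    rw [Set.eq_univ_iff_forall]
    intro C
    obtain ⟨g, rfl⟩ := Quotient.exists_rep C
    exact Set.mem_iUnion.2 ⟨(g : G ⧸ N), (hrange _ _).2 ⟨g, rfl, rfl⟩⟩
  rw [huniv]
  refine good_iUnion_finite (fun T => T = ∅ ∨ ∃ c, T = Set.range (F c)) ?_ ?_ _
    (fun c => Or.inr ⟨c, rfl⟩)
  · rintro T T' (rfl | ⟨c, rfl⟩) (rfl | ⟨c', rfl⟩)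
    · left; simp
    · left; simp
    · left; simp
    · rcases Set.eq_empty_or_nonempty (Set.range (F c) ∩ Set.range (F c')) with h | ⟨C, h, h'⟩
      · exact Or.inl h
      · right
        exact ⟨c, Set.inter_eq_left.2 (hsub c c' C h h')⟩
  · rintro T (rfl | ⟨c, rfl⟩)
    · exact good_empty
    · exact hpiece c
end

end CG

/-- The coset growth series of any subgroup of a finitely generated virtually abelian
group is rational, for any finite weighted monoid generating set. -/
theorem coset_growth_series_rational {G : Type*} [Group G]
    (n : ℕ) (N : Subgroup G) (hN : N.Normal) (hNfin : N.FiniteIndex)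
    (hNiso : Nonempty (N ≃* Multiplicative (Fin n → ℤ)))
    (S : Finset G) (hS : Submonoid.closure (S : Set G) = ⊤)
    (ω : G → ℕ) (hω : ∀ s ∈ S, 0 < ω s)
    (H : Subgroup G) :
    IsRationalSeries (PowerSeries.mk fun k =>
      (Nat.card {C : Quotient (QuotientGroup.rightRel H) //
        cosetWeight (S : Set G) ω H C = k} : ℤ)) := by
  classical
  obtain ⟨θ⟩ := hNiso
  let L : AddSubgroup (Fin n → ℤ) :=
    Subgroup.toAddSubgroup' ((H.subgroupOf N).map θ.toMonoidHom)
  let ν : G → (Fin n → ℤ) ⧸ L := fun g =>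
    if h : g ∈ N then QuotientAddGroup.mk (Multiplicative.toAdd (θ ⟨g, h⟩)) else 0
  have hν : ∀ g (h : g ∈ N), ν g = QuotientAddGroup.mk (Multiplicative.toAdd (θ ⟨g, h⟩)) :=
    fun g h => dif_pos h
  have : Finite (G ⧸ N) := inferInstance
  have hgood := CG.good_main N S ω ν (H := H) ?_ ?_ ?_ hS hω
  · convert hgood.2 using 1
    ext k
    simp only [CG.gf, CG.fib, PowerSeries.coeff_mk, Set.univ_inter]
    rfl
  · intro x hx y hy
    rw [hν _ hx, hν _ hy, hν _ (N.mul_mem hx hy), ← QuotientAddGroup.mk_add, ← toAdd_mul,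
      ← map_mul]
    rfl
  · intro a
    obtain ⟨v, rfl⟩ := QuotientAddGroup.mk_surjective a
    obtain ⟨x, hx⟩ := θ.surjective (Multiplicative.ofAdd v)
    refine ⟨x.1, x.2, ?_⟩
    rw [hν _ x.2]
    simp [hx]
  · intro x hx
    rw [hν _ hx, QuotientAddGroup.eq_zero_iff]
    constructor
    · rintro ⟨y, hy, he⟩
      have : y = ⟨x, hx⟩ := θ.injective he
      subst this
      exact hy
    · intro h
      exact ⟨⟨x, hx⟩, h, rfl⟩
end
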